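/- arXiv:2412.09724 — 7 statements merged into one kernel-verified Lean document; each statement's English description precedes it below -/
import Mathlib

section
/- The multiplication of the Kalck–Karmazyn algebra R_{r,a} is associative, and w_0 is a two-sided multiplicative identity; consequently R_{r,a} is an associative unital k-algebra of dimension r over k. -/
/-!
The condition `[i] < m(j)` is a lattice condition. Let `L` be the lattice of `(x, y)` with
`a·x ≡ y (mod r)`, and attach to each index `j` the numbers `X(j) = [j]` and `Y(j) = [-a·j]`, so
that `(X(j), -Y(j)) ∈ L`. Then `w_j · w_i ≠ 0` exactly when the rectangle
`[1, X(i)] × [1, Y(j)]` contains no point of `L` (`lt_KKm_iff`).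

If `w_j · w_i ≠ 0`, then `X(j+i) = X(j) + X(i)` and `Y(j+i) = Y(j) + Y(i)`, since a carry would
put `(r - X(j), Y(j))`, respectively `(X(i), r - Y(i))`, in the rectangle (`KKfree.val_add`,
`KKfree.KKy_add`). Hence `(w_l w_j) w_i ≠ 0` says that
`[1, X(i)] × [1, Y(l) + Y(j)]` and `[1, X(j)] × [1, Y(l)]` avoid `L`, while `w_l (w_j w_i) ≠ 0` says
that `[1, X(j) + X(i)] × [1, Y(l)]` and `[1, X(i)] × [1, Y(j)]` do. Both conditions imply that
`[1, X(i)] × [1, Y(j)]` and `[1, X(j)] × [1, Y(l)]` avoid `L`; what remains is that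
`[1, X(i)] × [Y(j) + 1, Y(j) + Y(l)]`, respectively `[X(j) + 1, X(j) + X(i)] × [1, Y(l)]`, avoids `L`,
and these two differ by the translation by `(X(j), -Y(j)) ∈ L` (`KKfree_assoc`).
Associativity follows by expanding both triple products over triples with a given sum; for `w₀`
the rectangles in question are empty.
-/

/-- The function `m : ZMod r → ℕ` of the Kalck–Karmazyn algebra: `m 0 = r` and, for `j ≠ 0`,
`m j = min_{1 ≤ k ≤ [-a·j]} [k·b]`, where `[x]` denotes the representative in `{0,…,r-1}`. -/
noncomputable def KKm (r a b : ℕ) (j : ZMod r) : ℕ :=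
  if j = 0 then r
  else sInf {v : ℕ | ∃ k : ℕ, 1 ≤ k ∧ k ≤ ((-(a : ZMod r)) * j).val ∧ v = (k * b) % r}

/-- The multiplication of the Kalck–Karmazyn algebra `R_{r,a}`, written on coordinates with
respect to the basis `{w_i : i ∈ ZMod r}`: `w_j · w_i = w_{i+j}` if `m j > [i]`, else `0`.
Here `f` holds the coefficients of the left factor and `g` those of the right factor. -/
noncomputable def KKmul (k : Type*) [Field k] (r a b : ℕ) [NeZero r]
    (f g : ZMod r → k) : ZMod r → k :=
  fun s => ∑ j : ZMod r, ∑ i : ZMod r,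
    if j + i = s ∧ i.val < KKm r a b j then f j * g i else 0

/-- The exponent of `y` attached to the basis index `j`: the representative of `-a·j` in
`{0,…,r-1}`. The corresponding exponent of `x` is `j.val`, and `(j.val, -KKy r a j)` lies in the
lattice `{(x, y) : a·x ≡ y (mod r)}`. -/
def KKy (r a : ℕ) (j : ZMod r) : ℕ := ((-(a : ZMod r)) * j).val

/-- The rectangle `[1, i.val] × [1, KKy r a j]` contains no point of the lattice `a·x ≡ y (mod r)`. -/
def KKfree (r a : ℕ) (j i : ZMod r) : Prop :=
  ∀ x y : ℕ, 1 ≤ x → x ≤ i.val → 1 ≤ y → y ≤ KKy r a j → (a : ZMod r) * x ≠ y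

lemma natCast_KKy {r : ℕ} [NeZero r] (a : ℕ) (j : ZMod r) :
    ((KKy r a j : ℕ) : ZMod r) = -(a : ZMod r) * j := by
  simp [KKy]

lemma KKy_lt {r : ℕ} [NeZero r] (a : ℕ) (j : ZMod r) : KKy r a j < r := ZMod.val_lt _

lemma KKy_add {r : ℕ} [NeZero r] (a : ℕ) (j l : ZMod r) :
    KKy r a (j + l) = (KKy r a j + KKy r a l) % r := by
  simp only [KKy, mul_add, ZMod.val_add]

lemma add_mod_cases {r u v : ℕ} (hu : u < r) (hv : v < r) :
    (u + v < r ∧ (u + v) % r = u + v) ∨ (r ≤ u + v ∧ (u + v) % r = u + v - r) := by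
  rcases lt_or_ge (u + v) r with h | h
  · exact Or.inl ⟨h, Nat.mod_eq_of_lt h⟩
  · refine Or.inr ⟨h, ?_⟩
    rw [Nat.mod_eq_sub_mod h, Nat.mod_eq_of_lt (by omega)]

/-- The condition `[i] < m(j)` defining the product says that a rectangle is free of lattice
points: the point of the lattice at height `k` in the strip `0 ≤ x < r` is `([k·b], k)`. -/
lemma lt_KKm_iff {r a b : ℕ} [NeZero r] (hab : (a : ZMod r) * b = 1) (j i : ZMod r) :
    i.val < KKm r a b j ↔ KKfree r a j i := by
  by_cases hj : j = 0
  · subst hj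
    simp only [KKm, if_true, KKfree, KKy, mul_zero, ZMod.val_zero]
    exact ⟨fun _ x y _ _ _ _ => by omega, fun _ => ZMod.val_lt i⟩
  have hy : 1 ≤ KKy r a j := by
    by_contra h
    have h0 : KKy r a j = 0 := by omega
    have h1 := natCast_KKy a j
    rw [h0, Nat.cast_zero] at h1
    exact hj (by linear_combination (-(b : ZMod r)) * -h1 - j * hab)
  have hne : {v : ℕ | ∃ k : ℕ, 1 ≤ k ∧ k ≤ ((-(a : ZMod r)) * j).val ∧
      v = (k * b) % r}.Nonempty := ⟨_, 1, le_rfl, hy, rfl⟩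
  rw [KKm, if_neg hj]
  constructor
  · intro h x y hx hxi hy1 hyj hxy
    have hxr : x < r := hxi.trans_lt (ZMod.val_lt i)
    have hmod : (y * b) % r = x := by
      have h2 : ((y * b : ℕ) : ZMod r) = (x : ℕ) := by
        push_cast
        linear_combination (-(b : ZMod r)) * hxy + (x : ZMod r) * hab
      rw [ZMod.natCast_eq_natCast_iff', Nat.mod_eq_of_lt hxr] at h2
      exact h2
    have := Nat.sInf_le (s := {v : ℕ | ∃ k : ℕ, 1 ≤ k ∧ k ≤ ((-(a : ZMod r)) * j).val ∧
      v = (k * b) % r}) ⟨y, hy1, hyj, hmod.symm⟩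
    omega
  · intro h
    obtain ⟨k, hk1, hkj, hk⟩ := Nat.sInf_mem hne
    rw [hk]
    by_contra! hle
    have hcast : (((k * b) % r : ℕ) : ZMod r) = k * b := by simp
    have hlat : (a : ZMod r) * (((k * b) % r : ℕ) : ZMod r) = k := by
      rw [hcast]; linear_combination (k : ZMod r) * hab
    refine h _ k ?_ hle hk1 hkj hlat
    -- If `[k·b] = 0` then `k ≡ 0`, impossible for `1 ≤ k < r`.
    by_contra h0
    have h0' : (k * b) % r = 0 := by omega
    rw [h0', Nat.cast_zero, mul_zero] at hlat
    have hdvd := (ZMod.natCast_eq_zero_iff k r).1 hlat.symm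
    have := Nat.le_of_dvd hk1 hdvd
    have := KKy_lt a j
    unfold KKy at this
    omega

/-- `x`-exponents add without carry when the product of basis elements is non-zero: otherwise
the lattice point `(r - [j], KKy j)` would lie in the rectangle. -/
lemma KKfree.val_add {r a : ℕ} [NeZero r] {j i : ZMod r} (ha : IsUnit (a : ZMod r))
    (h : KKfree r a j i) : (j + i).val = j.val + i.val := by
  rw [ZMod.val_add]
  have hj := ZMod.val_lt j
  rcases add_mod_cases hj (ZMod.val_lt i) with ⟨_, h1⟩ | ⟨h1, _⟩
  · exact h1
  exfalso
  have hi := ZMod.val_lt i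
  refine h (r - j.val) (KKy r a j) (by omega) (by omega) ?_ le_rfl ?_
  · by_contra h0
    have h0 : KKy r a j = 0 := by omega
    have h2 := natCast_KKy a j
    rw [h0, Nat.cast_zero, eq_comm, neg_mul, neg_eq_zero, ha.mul_right_eq_zero] at h2
    subst h2
    rw [ZMod.val_zero] at h1
    omega
  · rw [Nat.cast_sub hj.le, natCast_KKy]
    simp

/-- `y`-exponents add without carry when the product of basis elements is non-zero: otherwise
the lattice point `([i], r - KKy i)` would lie in the rectangle. -/
lemma KKfree.KKy_add {r a : ℕ} [NeZero r] {j i : ZMod r}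
    (h : KKfree r a j i) : KKy r a (j + i) = KKy r a j + KKy r a i := by
  rw [_root_.KKy_add]
  have hi := KKy_lt a i
  have hj := KKy_lt a j
  rcases add_mod_cases hj hi with ⟨_, h1⟩ | ⟨h1, _⟩
  · exact h1
  exfalso
  refine h i.val (r - KKy r a i) ?_ le_rfl (by omega) (by omega) ?_
  · by_contra h0
    have h0 : i.val = 0 := by omega
    rw [ZMod.val_eq_zero] at h0
    subst h0
    simp only [KKy, mul_zero, ZMod.val_zero] at h1 hj
    omega
  · rw [Nat.cast_sub hi.le, natCast_KKy]
    simp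

/-- Associativity on basis elements: `(w_l w_j) w_i ≠ 0` if and only if `w_l (w_j w_i) ≠ 0`.
A lattice point violating one side is carried to one violating the other side by the lattice
vector `([j], -KKy j)` or its negative. -/
lemma KKfree_assoc {r a : ℕ} [NeZero r] (ha : IsUnit (a : ZMod r)) (l j i : ZMod r) :
    (KKfree r a (l + j) i ∧ KKfree r a l j) ↔ (KKfree r a l (j + i) ∧ KKfree r a j i) := by
  have hyj := natCast_KKy a j
  have hxj : ((j.val : ℕ) : ZMod r) = j := by simp
  constructor
  · rintro ⟨h1, h2⟩
    have hy := h2.KKy_add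
    have h3 : KKfree r a j i := fun x y hx hxi hy1 hyj => h1 x y hx hxi hy1 (by omega)
    refine ⟨fun x y hx hxi hy1 hyl hxy => ?_, h3⟩
    have hx' := h3.val_add ha
    rcases le_or_gt x j.val with hle | hgt
    · exact h2 x y hx hle hy1 hyl hxy
    · refine h1 (x - j.val) (y + KKy r a j) (by omega) (by omega) (by omega) (by omega) ?_
      rw [Nat.cast_sub hgt.le, Nat.cast_add, hyj, hxj]
      linear_combination hxy
  · rintro ⟨h1, h2⟩
    have hx' := h2.val_add ha
    have h3 : KKfree r a l j := fun x y hx hxi hy1 hyj => h1 x y hx (by omega) hy1 hyj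
    refine ⟨fun x y hx hxi hy1 hyl hxy => ?_, h3⟩
    have hy := h3.KKy_add
    rcases le_or_gt y (KKy r a j) with hle | hgt
    · exact h2 x y hx hxi hy1 hle hxy
    · refine h1 (x + j.val) (y - KKy r a j) (by omega) (by omega) (by omega) (by omega) ?_
      rw [Nat.cast_sub hgt.le, Nat.cast_add, hyj, hxj]
      linear_combination hxy

open Classical in
lemma KKmul_apply (k : Type*) [Field k] {r a b : ℕ} [NeZero r] (hab : (a : ZMod r) * b = 1)
    (f g : ZMod r → k) (s : ZMod r) :
    KKmul k r a b f g s = ∑ j, if KKfree r a j (s - j) then f j * g (s - j) else 0 := by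
  unfold KKmul
  refine Finset.sum_congr rfl fun j _ => ?_
  rw [Finset.sum_eq_single (s - j)]
  · simp [lt_KKm_iff hab]
  · intro i _ hi
    refine if_neg fun h => hi ?_
    rw [← h.1]; ring
  · simp

/-- the multiplication of `R_{r,a}` is associative, `w₀` is a two-sided identity,
and `R_{r,a}` has dimension `r` over `k`. -/
theorem kalckKarmazyn_assoc_unital (k : Type*) [Field k] (r a b : ℕ) [NeZero r]
    (ha : 0 < a) (har : a < r) (hcop : Nat.Coprime a r)
    (hb : 0 < b) (hbr : b < r) (hab : a * b % r = 1) :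
    (∀ f g h : ZMod r → k,
        KKmul k r a b (KKmul k r a b f g) h = KKmul k r a b f (KKmul k r a b g h)) ∧
    (∀ f : ZMod r → k,
        KKmul k r a b (Pi.single 0 1) f = f ∧ KKmul k r a b f (Pi.single 0 1) = f) ∧
    Module.finrank k (ZMod r → k) = r := by
  classical
  have hab' : (a : ZMod r) * b = 1 := by
    have h := congrArg (Nat.cast : ℕ → ZMod r) hab
    simpa using h
  have hu : IsUnit (a : ZMod r) := IsUnit.of_mul_eq_one _ hab'
  refine ⟨fun f g h => ?_, fun f => ⟨?_, ?_⟩, by simp [ZMod.card]⟩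
  · funext s
    -- Both sides are sums over triples `(l, m, i)` with `l + m + i = s`.
    have hL : KKmul k r a b (KKmul k r a b f g) h s = ∑ l, ∑ m,
        if KKfree r a (l + m) (s - l - m) ∧ KKfree r a l m
          then f l * g m * h (s - l - m) else 0 := by
      rw [KKmul_apply k hab']
      simp only [KKmul_apply k hab', Finset.sum_mul, ite_and]
      have : ∀ j, (if KKfree r a j (s - j) then
          ∑ l, (if KKfree r a l (j - l) then f l * g (j - l) else 0) * h (s - j) else 0) =
          ∑ l, if KKfree r a j (s - j) then
            if KKfree r a l (j - l) then f l * g (j - l) * h (s - j) else 0 else 0 := by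
        intro j
        split_ifs <;> simp [ite_mul]
      simp only [this]
      rw [Finset.sum_comm]
      refine Finset.sum_congr rfl fun l _ => ?_
      rw [← Equiv.sum_comp (Equiv.addLeft l)]
      simp [sub_sub]
    have hR : KKmul k r a b f (KKmul k r a b g h) s = ∑ l, ∑ m,
        if KKfree r a l (m + (s - l - m)) ∧ KKfree r a m (s - l - m)
          then f l * g m * h (s - l - m) else 0 := by
      rw [KKmul_apply k hab']
      refine Finset.sum_congr rfl fun l _ => ?_
      simp only [KKmul_apply k hab', add_sub_cancel, ite_and]
      split_ifs <;> simp [Finset.mul_sum, mul_ite, mul_assoc]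
    rw [hL, hR]
    simp only [KKfree_assoc hu]
  · funext s
    rw [KKmul_apply k hab', Finset.sum_eq_single 0]
    · have : KKfree r a 0 s := fun x y _ _ hy hy' => by
        simp only [KKy, mul_zero, ZMod.val_zero] at hy'
        omega
      simp [this]
    · intro j _ hj
      simp [hj]
    · simp
  · funext s
    rw [KKmul_apply k hab', Finset.sum_eq_single s]
    · have : KKfree r a s 0 := fun x y hx hx' _ _ => by
        rw [ZMod.val_zero] at hx'
        omega
      simp [this]
    · intro j _ hj
      simp [sub_ne_zero.2 hj.symm]
    · simp
end

section
/- Suppose a = r − 1 (so that also b = r − 1). Then for all i, j ∈ Z/rZ one has m(j) > [i] if and only if [i] + [j] < r, and the k-linear map sending w_i to the class of T^{[i]} is a k-algebra isomorphism from R_{r,r−1} onto the truncated polynomial algebra k[T]/(T^r). -/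
theorem natCast_eq_neg_one_of_eq_sub_one {r a : ℕ} (hr : 2 ≤ r) (ha : a = r - 1) :
    (a : ZMod r) = -1 := by
  subst ha
  rw [Nat.cast_sub (by omega)]
  simp

theorem mul_sub_one_mod {r k : ℕ} (hk : 1 ≤ k) (hkr : k < r) : k * (r - 1) % r = r - k := by
  obtain ⟨c, rfl⟩ : ∃ c, k = c + 1 := ⟨k - 1, by omega⟩
  obtain ⟨d, rfl⟩ : ∃ d, r = c + 1 + d := ⟨r - (c + 1), by omega⟩
  have h : (c + 1) * (c + 1 + d - 1) = d + (c + 1 + d) * c := by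
    rw [show c + 1 + d - 1 = c + d by omega]
    ring
  rw [h, Nat.add_mul_mod_self_left, Nat.mod_eq_of_lt (by omega)]
  omega

theorem KKm_of_eq_sub_one {r a b : ℕ} [NeZero r] (hr : 2 ≤ r) (ha : a = r - 1)
    (hb : b = r - 1) (j : ZMod r) : KKm r a b j = r - j.val := by
  unfold KKm
  split_ifs with hj
  · simp [hj]
  · have hj0 : j.val ≠ 0 := by rwa [Ne, ZMod.val_eq_zero]
    have hjr : j.val < r := ZMod.val_lt j
    rw [natCast_eq_neg_one_of_eq_sub_one hr ha, neg_neg, one_mul, hb]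
    refine IsLeast.csInf_eq ⟨⟨j.val, by omega, le_rfl, (mul_sub_one_mod (by omega) hjr).symm⟩, ?_⟩
    rintro v ⟨k, hk1, hkj, rfl⟩
    rw [mul_sub_one_mod hk1 (by omega)]
    omega

theorem lt_KKm_iff_of_eq_sub_one {r a b : ℕ} [NeZero r] (hr : 2 ≤ r) (ha : a = r - 1)
    (hb : b = r - 1) (i j : ZMod r) : i.val < KKm r a b j ↔ i.val + j.val < r := by
  rw [KKm_of_eq_sub_one hr ha hb]
  omega

/-- The polynomial `∑ f i · T^{[i]}`, of degree `< r`, with coordinate vector `f`. -/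
noncomputable def truncPoly (k : Type*) [Field k] (r : ℕ) [NeZero r] :
    (ZMod r → k) →ₗ[k] Polynomial k :=
  Fintype.linearCombination k fun i : ZMod r => (Polynomial.X : Polynomial k) ^ i.val

/-- The linear map `w_i ↦ T^{[i]}` into `k[T]/(T^r)`. -/
noncomputable def truncMap (k : Type*) [Field k] (r : ℕ) [NeZero r] :
    (ZMod r → k) →ₗ[k] (Polynomial k ⧸ Ideal.span {(Polynomial.X : Polynomial k) ^ r}) :=
  (Ideal.Quotient.mkₐ k (Ideal.span {(Polynomial.X : Polynomial k) ^ r})).toLinearMap ∘ₗ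
    truncPoly k r

theorem truncMap_apply {k : Type*} [Field k] {r : ℕ} [NeZero r] (f : ZMod r → k) :
    truncMap k r f = ∑ i, f i • Ideal.Quotient.mk
      (Ideal.span {(Polynomial.X : Polynomial k) ^ r}) (Polynomial.X ^ i.val) := by
  simp only [truncMap, truncPoly, LinearMap.comp_apply, Fintype.linearCombination_apply, map_sum,
    map_smul]
  rfl

theorem coeff_truncPoly {k : Type*} [Field k] {r : ℕ} [NeZero r] (f : ZMod r → k) (i : ZMod r) :
    (truncPoly k r f).coeff i.val = f i := by
  simp [truncPoly, Fintype.linearCombination_apply, Polynomial.finsetSum_coeff,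
    Polynomial.coeff_X_pow, (ZMod.val_injective r).eq_iff]

theorem mk_eq_zero_iff_coeff {k : Type*} [Field k] {r : ℕ} [NeZero r] (p : Polynomial k) :
    Ideal.Quotient.mk (Ideal.span {(Polynomial.X : Polynomial k) ^ r}) p = 0 ↔
      ∀ i : ZMod r, p.coeff i.val = 0 := by
  rw [Ideal.Quotient.eq_zero_iff_mem, Ideal.mem_span_singleton, Polynomial.X_pow_dvd_iff]
  refine ⟨fun h i => h _ (ZMod.val_lt i), fun h d hd => ?_⟩
  simpa [ZMod.val_natCast, Nat.mod_eq_of_lt hd] using h (d : ZMod r)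

theorem truncMap_bijective (k : Type*) [Field k] (r : ℕ) [NeZero r] :
    Function.Bijective (truncMap k r) := by
  constructor
  · rw [injective_iff_map_eq_zero]
    intro f hf
    ext i
    rw [← coeff_truncPoly f i]
    exact (mk_eq_zero_iff_coeff (truncPoly k r f)).1 hf i
  · intro q
    obtain ⟨p, rfl⟩ := Ideal.Quotient.mk_surjective q
    refine ⟨fun i => p.coeff i.val, ?_⟩
    change Ideal.Quotient.mk _ (truncPoly k r _) = _
    rw [← sub_eq_zero, ← map_sub, mk_eq_zero_iff_coeff]
    intro i
    rw [Polynomial.coeff_sub, coeff_truncPoly, sub_self]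

theorem truncMap_KKmul {k : Type*} [Field k] {r a b : ℕ} [NeZero r]
    (hm : ∀ i j : ZMod r, i.val < KKm r a b j ↔ i.val + j.val < r) (f g : ZMod r → k) :
    truncMap k r (KKmul k r a b f g) = truncMap k r f * truncMap k r g := by
  simp only [truncMap_apply, KKmul, Finset.sum_smul]
  rw [Finset.sum_mul_sum, Finset.sum_comm]
  refine Finset.sum_congr rfl fun j _ => ?_
  rw [Finset.sum_comm]
  refine Finset.sum_congr rfl fun i _ => ?_
  -- Only `s = j + i` contributes to the sum over the target index.
  rw [Finset.sum_eq_single (j + i) (fun s _ hs => by simp [hs.symm]) (by simp),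
    smul_mul_smul_comm, ← map_mul, ← pow_add]
  simp only [true_and, hm]
  split_ifs with h
  · rw [ZMod.val_add_of_lt (by omega)]
  · have hz : Ideal.Quotient.mk (Ideal.span {(Polynomial.X : Polynomial k) ^ r})
        (Polynomial.X ^ (j.val + i.val)) = 0 := by
      rw [Ideal.Quotient.eq_zero_iff_mem, Ideal.mem_span_singleton]
      exact pow_dvd_pow _ (by omega)
    rw [hz, smul_zero, zero_smul]

/-- for `a = b = r - 1`, `m j > [i] ↔ [i] + [j] < r`, and `w_i ↦ T^{[i]}` is a
`k`-algebra isomorphism from `R_{r,r-1}` onto `k[T]/(T^r)`. -/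
theorem kalckKarmazyn_of_a_eq_r_sub_one (k : Type*) [Field k] (r a b : ℕ) [NeZero r]
    (ha : 0 < a) (har : a < r) (hcop : Nat.Coprime a r)
    (hb : 0 < b) (hbr : b < r) (hab : a * b % r = 1)
    (haval : a = r - 1) (hbval : b = r - 1) :
    (∀ i j : ZMod r, i.val < KKm r a b j ↔ i.val + j.val < r) ∧
    ∃ e : (ZMod r → k) ≃ₗ[k]
        (Polynomial k ⧸ Ideal.span {(Polynomial.X : Polynomial k) ^ r}),
      (∀ i : ZMod r, e (Pi.single i 1) =
          Ideal.Quotient.mk (Ideal.span {(Polynomial.X : Polynomial k) ^ r})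
            (Polynomial.X ^ i.val)) ∧
      (∀ f g : ZMod r → k, e (KKmul k r a b f g) = e f * e g) := by
  have hr : 2 ≤ r := by omega
  have hm := lt_KKm_iff_of_eq_sub_one hr haval hbval
  refine ⟨hm, LinearEquiv.ofBijective (truncMap k r) (truncMap_bijective k r), fun i => ?_,
    fun f g => truncMap_KKmul hm f g⟩
  rw [LinearEquiv.ofBijective_apply, truncMap_apply]
  simp [Pi.single_apply, ite_smul]
end

section
/- Suppose a = 1 (so that also b = 1). Then for all i, j ∈ Z/rZ one has m(j) > [i] if and only if i = 0 or j = 0, and the k-linear map sending w_0 to 1 and, for i ≠ 0, w_i to the class of X_i, is a k-algebra isomorphism from R_{r,1} onto the quotient k[X_1, …, X_{r−1}]/(X_1, …, X_{r−1})² of the polynomial ring in r−1 variables by the square of the ideal generated by all the variables. -/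
theorem KKm_one_one (r : ℕ) [NeZero r] (hr : 1 < r) (j : ZMod r) (hj : j ≠ 0) :
    KKm r 1 1 j = 1 := by
  have hv : 1 ≤ (-j).val := by
    rw [Nat.one_le_iff_ne_zero, Ne, ZMod.val_eq_zero]
    exact neg_ne_zero.mpr hj
  have hlt : (-j).val < r := ZMod.val_lt _
  simp only [KKm, if_neg hj, Nat.cast_one, neg_one_mul, mul_one]
  refine IsLeast.csInf_eq ⟨⟨1, le_rfl, hv, (Nat.mod_eq_of_lt hr).symm⟩, ?_⟩
  rintro v ⟨n, hn, hnj, rfl⟩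
  -- `n ≤ [-j] < r`, so no reduction modulo `r` takes place.
  rwa [Nat.mod_eq_of_lt (hnj.trans_lt hlt)]

theorem val_lt_KKm_one_one (r : ℕ) [NeZero r] (hr : 1 < r) (i j : ZMod r) :
    i.val < KKm r 1 1 j ↔ (i = 0 ∨ j = 0) := by
  by_cases hj : j = 0
  · simp [hj, KKm, ZMod.val_lt]
  · simp [hj, KKm_one_one r hr j hj]

theorem KKmul_zero (k : Type*) [Field k] (r : ℕ) [NeZero r] (hr : 1 < r) (f g : ZMod r → k) :
    KKmul k r 1 1 f g 0 = f 0 * g 0 := by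
  simp only [KKmul, val_lt_KKm_one_one r hr]
  have h : ∀ j i : ZMod r, (j + i = 0 ∧ (i = 0 ∨ j = 0)) ↔ (j = 0 ∧ i = 0) := by
    intro j i
    constructor
    · rintro ⟨h, rfl | rfl⟩ <;> simpa using h
    · rintro ⟨rfl, rfl⟩
      simp
  simp [h, ite_and]

theorem KKmul_of_ne_zero (k : Type*) [Field k] (r : ℕ) [NeZero r] (hr : 1 < r) (f g : ZMod r → k)
    (s : ZMod r) (hs : s ≠ 0) :
    KKmul k r 1 1 f g s = f 0 * g s + f s * g 0 := by
  simp only [KKmul, val_lt_KKm_one_one r hr]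
  -- The only contributing pairs are `(0, s)` and `(s, 0)`, which are distinct as `s ≠ 0`.
  have h : ∀ j i : ZMod r, (if j + i = s ∧ (i = 0 ∨ j = 0) then f j * g i else 0) =
      (if j = 0 then if i = s then f j * g i else 0 else 0) +
        (if j = s then if i = 0 then f j * g i else 0 else 0) := by
    intro j i
    by_cases hj : j = 0
    · subst hj
      simp only [zero_add, or_true, and_true, if_true, if_neg hs.symm, add_zero]
    · by_cases hi : i = 0
      · subst hi
        simp [hj]
      · simp [hj, hi]
  simp [h, Finset.sum_add_distrib]

/-- Splitting off the `0`-th coordinate identifies the underlying space of `R_{r,1}` with that of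
the trivial square-zero extension of `k` by `k ^ {i // i ≠ 0}`. -/
def coordEquiv (k : Type*) [Field k] (r : ℕ) :
    (ZMod r → k) ≃ₗ[k] TrivSqZeroExt k ({i : ZMod r // i ≠ 0} → k) where
  toFun f := (f 0, fun i => f i)
  invFun p s := if h : s = 0 then p.1 else p.2 ⟨s, h⟩
  map_add' _ _ := rfl
  map_smul' _ _ := rfl
  left_inv f := by
    funext s
    by_cases h : s = 0
    · simp [h]
    · simp [h]
  right_inv p := by
    refine Prod.ext ?_ (funext fun i => ?_)
    · simp
    · simp [i.2]

theorem fst_coordEquiv (k : Type*) [Field k] (r : ℕ) (f : ZMod r → k) :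
    (coordEquiv k r f).fst = f 0 := rfl

theorem snd_coordEquiv (k : Type*) [Field k] (r : ℕ) (f : ZMod r → k)
    (i : {i : ZMod r // i ≠ 0}) : (coordEquiv k r f).snd i = f i := rfl

theorem coordEquiv_KKmul (k : Type*) [Field k] (r : ℕ) [NeZero r] (hr : 1 < r)
    (f g : ZMod r → k) :
    coordEquiv k r (KKmul k r 1 1 f g) = coordEquiv k r f * coordEquiv k r g := by
  refine TrivSqZeroExt.ext ?_ (funext fun i => ?_)
  · simp [fst_coordEquiv, KKmul_zero k r hr]
  · simp [fst_coordEquiv, snd_coordEquiv, KKmul_of_ne_zero k r hr f g i i.2, mul_comm]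

section Quotient

variable (k : Type*) [Field k] (σ : Type*)

/-- The ideal `(X_i : i ∈ σ)²` of the polynomial ring. -/
noncomputable abbrev sqIdeal : Ideal (MvPolynomial σ k) :=
  (Ideal.span (Set.range (MvPolynomial.X (R := k) (σ := σ)))) ^ 2

/-- The algebra map from `k[X_i]/(X_i)²` to the square-zero extension sending `X_i` to
`(0, e_i)`. -/
noncomputable def quotToExt [DecidableEq σ] :
    (MvPolynomial σ k ⧸ sqIdeal k σ) →ₐ[k] TrivSqZeroExt k (σ → k) :=
  Ideal.Quotient.liftₐ (sqIdeal k σ)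
    (MvPolynomial.aeval fun i => TrivSqZeroExt.inr (Pi.single i (1 : k))) (by
      intro p hp
      rw [← RingHom.mem_ker]
      refine (?_ : sqIdeal k σ ≤ _) hp
      -- Products of two variables generate the square and map to products of elements `(0, v)`.
      rw [sqIdeal, pow_two, Ideal.span_mul_span', Ideal.span_le]
      rintro _ ⟨_, ⟨i, rfl⟩, _, ⟨j, rfl⟩, rfl⟩
      simp [RingHom.mem_ker])

theorem mk_X_mul_mk_X (i j : σ) :
    Ideal.Quotient.mk (sqIdeal k σ) (MvPolynomial.X i) *
      Ideal.Quotient.mk (sqIdeal k σ) (MvPolynomial.X j) = 0 := by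
  rw [← map_mul, Ideal.Quotient.eq_zero_iff_mem, sqIdeal, pow_two]
  exact Ideal.mul_mem_mul (Ideal.subset_span ⟨i, rfl⟩) (Ideal.subset_span ⟨j, rfl⟩)

/-- The algebra map from the square-zero extension to `k[X_i]/(X_i)²` sending `(0, v)` to the
class of `∑ v_i X_i`. -/
noncomputable def extToQuot [Fintype σ] :
    TrivSqZeroExt k (σ → k) →ₐ[k] (MvPolynomial σ k ⧸ sqIdeal k σ) :=
  TrivSqZeroExt.liftEquivOfComm
    ⟨Fintype.linearCombination k
        (fun i => Ideal.Quotient.mk (sqIdeal k σ) (MvPolynomial.X i)), by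
      intro x y
      simp [Fintype.linearCombination_apply, Finset.sum_mul_sum, mk_X_mul_mk_X]⟩

theorem extToQuot_inr_single [Fintype σ] [DecidableEq σ] (i : σ) :
    extToQuot k σ (TrivSqZeroExt.inr (Pi.single i 1)) =
      Ideal.Quotient.mk (sqIdeal k σ) (MvPolynomial.X i) := by
  simp [extToQuot]

theorem quotToExt_mk_X [DecidableEq σ] (i : σ) :
    quotToExt k σ (Ideal.Quotient.mk (sqIdeal k σ) (MvPolynomial.X i)) =
      TrivSqZeroExt.inr (Pi.single i 1) := by
  refine (Ideal.Quotient.lift_mk _ _ _).trans ?_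
  simp

/-- The square-zero extension of `k` by `k ^ σ` is the quotient `k[X_i]/(X_i)²`. -/
noncomputable def quotEquiv [Fintype σ] [DecidableEq σ] :
    TrivSqZeroExt k (σ → k) ≃ₐ[k] (MvPolynomial σ k ⧸ sqIdeal k σ) :=
  AlgEquiv.ofAlgHom (extToQuot k σ) (quotToExt k σ)
    (by
      refine Ideal.Quotient.algHom_ext _ (MvPolynomial.algHom_ext fun i => ?_)
      simp [quotToExt_mk_X, extToQuot_inr_single])
    (by
      refine TrivSqZeroExt.algHom_ext fun m => ?_
      -- Both sides are linear in `m`, so it suffices to compare them on the standard basis.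
      have h : ((quotToExt k σ).comp (extToQuot k σ)).toLinearMap ∘ₗ
            TrivSqZeroExt.inrHom k (σ → k) =
          (AlgHom.id k _).toLinearMap ∘ₗ TrivSqZeroExt.inrHom k (σ → k) := by
        refine LinearMap.pi_ext' fun i => LinearMap.ext_ring ?_
        simp [quotToExt_mk_X, extToQuot_inr_single]
      exact LinearMap.congr_fun h m)

theorem quotEquiv_inr_single [Fintype σ] [DecidableEq σ] (i : σ) :
    quotEquiv k σ (TrivSqZeroExt.inr (Pi.single i 1)) =
      Ideal.Quotient.mk (sqIdeal k σ) (MvPolynomial.X i) :=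
  extToQuot_inr_single k σ i

end Quotient

/-- for `a = b = 1`, `m j > [i] ↔ i = 0 ∨ j = 0`, and `w₀ ↦ 1`, `w_i ↦ X_i`
(`i ≠ 0`) defines a `k`-algebra isomorphism from `R_{r,1}` onto
`k[X_1,…,X_{r-1}]/(X_1,…,X_{r-1})²` (variables indexed by the nonzero elements of `ZMod r`). -/
theorem kalckKarmazyn_of_a_eq_one (k : Type*) [Field k] (r a b : ℕ) [NeZero r]
    (ha : 0 < a) (har : a < r) (hcop : Nat.Coprime a r)
    (hb : 0 < b) (hbr : b < r) (hab : a * b % r = 1)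
    (haval : a = 1) (hbval : b = 1) :
    (∀ i j : ZMod r, i.val < KKm r a b j ↔ (i = 0 ∨ j = 0)) ∧
    ∃ e : (ZMod r → k) ≃ₗ[k]
        (MvPolynomial {i : ZMod r // i ≠ 0} k ⧸
          (Ideal.span (Set.range (MvPolynomial.X (R := k) (σ := {i : ZMod r // i ≠ 0}))))^2),
      e (Pi.single 0 1) = 1 ∧
      (∀ (i : ZMod r) (h : i ≠ 0), e (Pi.single i 1) =
          Ideal.Quotient.mk
            ((Ideal.span (Set.range (MvPolynomial.X (R := k) (σ := {i : ZMod r // i ≠ 0}))))^2)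
            (MvPolynomial.X ⟨i, h⟩)) ∧
      (∀ f g : ZMod r → k, e (KKmul k r a b f g) = e f * e g) := by
  subst haval hbval
  refine ⟨val_lt_KKm_one_one r har, (coordEquiv k r).trans (quotEquiv k {i : ZMod r // i ≠ 0}).toLinearEquiv,
    ?_, fun i h => ?_, fun f g => ?_⟩
  · have h : coordEquiv k r (Pi.single 0 1) = 1 := by
      refine TrivSqZeroExt.ext ?_ (funext fun i => ?_)
      · simp [fst_coordEquiv]
      · simp [snd_coordEquiv, i.2]
    simp [h]
  · have h' : coordEquiv k r (Pi.single i 1) = TrivSqZeroExt.inr (Pi.single ⟨i, h⟩ 1) := by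
      refine TrivSqZeroExt.ext ?_ (funext fun j => ?_)
      · simp [fst_coordEquiv, h.symm]
      · simp [snd_coordEquiv, Pi.single_apply, Subtype.ext_iff]
    rw [LinearEquiv.trans_apply, h', AlgEquiv.toLinearEquiv_apply]
    exact quotEquiv_inr_single k {i : ZMod r // i ≠ 0} ⟨i, h⟩
  · simp [coordEquiv_KKmul k r har]
end

section
/- The Kalck–Karmazyn algebra R_{r,a} is commutative if and only if a = 1 or a = r − 1. -/
/-- The condition `[i] < m j` without the infimum. The case `j = 0` is covered, as the range of
`k` is then empty and `[i] < r = m 0` always holds. -/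
theorem val_lt_KKm_iff (r a b : ℕ) [NeZero r] (hab : a * b % r = 1)
    (i j : ZMod r) :
    i.val < KKm r a b j ↔
      ∀ k : ℕ, 1 ≤ k → k ≤ ((-(a : ZMod r)) * j).val → i.val < (k * b) % r := by
  unfold KKm
  split_ifs with hj
  · subst hj
    simp only [mul_zero, ZMod.val_zero]
    exact ⟨fun _ k h1 h2 => by omega, fun _ => ZMod.val_lt i⟩
  · -- `a` is invertible with inverse `b`, so the set of which the infimum is taken is nonempty.
    have hu : (a : ZMod r) * b = 1 := by
      rw [← Nat.cast_mul, ← ZMod.natCast_mod, hab, Nat.cast_one]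
    have hne : (-(a : ZMod r)) * j ≠ 0 := by
      intro h
      apply hj
      calc j = (a * b) * j := by rw [hu, one_mul]
        _ = -b * ((-(a : ZMod r)) * j) := by ring
        _ = 0 := by rw [h, mul_zero]
    have hpos : 1 ≤ ((-(a : ZMod r)) * j).val :=
      Nat.one_le_iff_ne_zero.mpr (by rwa [Ne, ZMod.val_eq_zero])
    constructor
    · intro h k h1 h2
      exact lt_of_lt_of_le h (Nat.sInf_le ⟨k, h1, h2, rfl⟩)
    · intro h
      obtain ⟨k, h1, h2, hk⟩ := Nat.sInf_mem
        (s := {v : ℕ | ∃ k : ℕ, 1 ≤ k ∧ k ≤ ((-(a : ZMod r)) * j).val ∧ v = (k * b) % r})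
        ⟨_, 1, le_rfl, hpos, rfl⟩
      rw [hk]
      exact h k h1 h2

theorem KKmul_single (k : Type*) [Field k] (r a b : ℕ) [NeZero r] (i j : ZMod r) :
    KKmul k r a b (Pi.single j 1) (Pi.single i 1) (j + i) =
      if i.val < KKm r a b j then 1 else 0 := by
  unfold KKmul
  rw [Finset.sum_eq_single j, Finset.sum_eq_single i]
  · simp
  · intro x _ hx
    simp [hx]
  · simp
  · intro x _ hx
    simp [hx]
  · simp

theorem KKmul_comm_iff (k : Type*) [Field k] (r a b : ℕ) [NeZero r] :
    (∀ f g : ZMod r → k, KKmul k r a b f g = KKmul k r a b g f) ↔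
      ∀ i j : ZMod r, i.val < KKm r a b j ↔ j.val < KKm r a b i := by
  constructor
  · intro h i j
    have h1 := congrFun (h (Pi.single j 1) (Pi.single i 1)) (j + i)
    rw [KKmul_single, add_comm, KKmul_single] at h1
    by_cases p : i.val < KKm r a b j <;> by_cases q : j.val < KKm r a b i <;>
      simp_all only [if_true, if_false, one_ne_zero, zero_ne_one]
  · intro h f g
    funext s
    unfold KKmul
    rw [Finset.sum_comm]
    refine Finset.sum_congr rfl fun i _ => Finset.sum_congr rfl fun j _ => ?_
    simp only [add_comm j i, h i j, mul_comm (f j)]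

/-- the Kalck–Karmazyn algebra `R_{r,a}` is commutative if and only if
`a = 1` or `a = r - 1`. -/
theorem kalckKarmazyn_commutative_iff (k : Type*) [Field k] (r a b : ℕ) [NeZero r]
    (ha : 0 < a) (har : a < r) (hcop : Nat.Coprime a r)
    (hb : 0 < b) (hbr : b < r) (hab : a * b % r = 1) :
    (∀ f g : ZMod r → k, KKmul k r a b f g = KKmul k r a b g f) ↔ (a = 1 ∨ a = r - 1) := by
  have hr : 1 < r := by omega
  have : Fact (1 < r) := ⟨hr⟩
  rw [KKmul_comm_iff]
  simp only [val_lt_KKm_iff r a b hab]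
  constructor
  · intro h
    by_contra! hne
    obtain ⟨h1, h2⟩ := hne
    have hb1 : b ≠ 1 := by
      rintro rfl
      rw [mul_one, Nat.mod_eq_of_lt har] at hab
      exact h1 hab
    have hu : (a : ZMod r) * b = 1 := by
      rw [← Nat.cast_mul, ← ZMod.natCast_mod, hab, Nat.cast_one]
    have hvb : (-(b : ZMod r)).val = r - b := by
      have : (-(b : ZMod r)) = ((r - b : ℕ) : ZMod r) := by
        rw [Nat.cast_sub hbr.le]; simp
      rw [this, ZMod.val_natCast_of_lt (by omega)]
    have hva : (-(a : ZMod r) * 1).val = r - a := by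
      have : (-(a : ZMod r)) * 1 = ((r - a : ℕ) : ZMod r) := by
        rw [Nat.cast_sub har.le]; simp
      rw [this, ZMod.val_natCast_of_lt (by omega)]
    have hkey := (h 1 (-(b : ZMod r))).mp (by
      intro k hk1 hk2
      rw [neg_mul_neg, hu, ZMod.val_one] at hk2
      obtain rfl : k = 1 := le_antisymm hk2 hk1
      rw [one_mul, Nat.mod_eq_of_lt hbr, ZMod.val_one]
      omega) (r - a - 1) (by omega) (by rw [hva]; omega)
    have hmod : (r - a - 1) * b % r = r - 1 - b := by
      have hc : (((r - a - 1) * b : ℕ) : ZMod r) = ((r - 1 - b : ℕ) : ZMod r) := by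
        rw [Nat.cast_mul, Nat.cast_sub (by omega), Nat.cast_sub (by omega),
          Nat.cast_sub (by omega), Nat.cast_sub (by omega)]
        simp only [CharP.cast_eq_zero, Nat.cast_one]
        linear_combination -hu
      have := (ZMod.natCast_eq_natCast_iff' _ _ _).mp hc
      rwa [Nat.mod_eq_of_lt (show r - 1 - b < r by omega)] at this
    rw [hvb, hmod] at hkey
    omega
  · rintro (rfl | hra)
    · have hb1 : b = 1 := by rwa [one_mul, Nat.mod_eq_of_lt hbr] at hab
      subst hb1
      have key : ∀ i j : ZMod r,
          (∀ k : ℕ, 1 ≤ k → k ≤ ((-((1 : ℕ) : ZMod r)) * j).val → i.val < (k * 1) % r) ↔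
            (i = 0 ∨ j = 0) := by
        intro i j
        constructor
        · intro h
          by_contra! hne
          have hj : -((1 : ℕ) : ZMod r) * j ≠ 0 := by simpa using hne.2
          have h0 := h 1 le_rfl
            (Nat.one_le_iff_ne_zero.mpr (by rwa [Ne, ZMod.val_eq_zero]))
          rw [mul_one, Nat.mod_eq_of_lt hr] at h0
          exact hne.1 ((ZMod.val_eq_zero i).mp (by omega))
        · rintro (rfl | rfl) k h1 h2
          · have := ZMod.val_lt (-((1 : ℕ) : ZMod r) * j)
            rw [mul_one, Nat.mod_eq_of_lt (by omega), ZMod.val_zero]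
            omega
          · simp only [mul_zero, ZMod.val_zero] at h2
            omega
      intro i j
      rw [key, key, or_comm]
    · -- `(r - 1) * b = r * (b - 1) + (r - b)`, so `r - b = 1`.
      have hbr1 : b = r - 1 := by
        have : a * b = (r - b) + r * (b - 1) := by
          subst hra
          zify [hbr.le, hb, hr.le]
          ring
        rw [this, Nat.add_mul_mod_self_left, Nat.mod_eq_of_lt (by omega)] at hab
        omega
      have hca : -(a : ZMod r) = 1 := by
        rw [hra, Nat.cast_sub hr.le]; simp
      have key : ∀ i j : ZMod r,
          (∀ k : ℕ, 1 ≤ k → k ≤ ((-(a : ZMod r)) * j).val → i.val < (k * b) % r) ↔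
            i.val + j.val < r := by
        intro i j
        rw [hca, one_mul]
        have hj := ZMod.val_lt j
        have hm : ∀ k : ℕ, 1 ≤ k → k ≤ j.val → k * b % r = r - k := by
          intro k h1 h2
          have : k * b = (r - k) + r * (k - 1) := by
            subst hbr1
            zify [h1, (show k ≤ r by omega), hr.le]
            ring
          rw [this, Nat.add_mul_mod_self_left, Nat.mod_eq_of_lt (by omega)]
        constructor
        · intro h
          rcases Nat.eq_zero_or_pos j.val with h0 | h0
          · rw [h0]; exact ZMod.val_lt i
          · have := h _ h0 le_rfl
            rw [hm _ h0 le_rfl] at this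
            omega
        · intro h k h1 h2
          rw [hm k h1 h2]
          omega
      intro i j
      rw [key, key, add_comm]
end

section
/- The ideal t·𝒪 is a two-sided ideal of 𝒪, and the quotient k-algebra 𝒪/t𝒪 is isomorphic to k[x, y, z]/(x, y, z)², the quotient of the polynomial ring in three variables by the square of the ideal (x, y, z). (In other words, the special fiber at t = 0 of the order 𝒪 is the four-dimensional Kalck–Karmazyn algebra R_{4,1}.) -/
/-! Write a matrix in the order as `M = a₀ + t·N`, where `N` has entries `0, a₃, a₁, a₂`. The
part `t·N` multiplies with itself to something divisible by `t²`, so modulo `t·𝒪` only the four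
scalars `aᵢ(0)` survive, and they multiply as `(a₀, v) (b₀, w) = (a₀ b₀, a₀ w + b₀ v)`, the
multiplication of `k[x, y, z]/(x, y, z)²` in the basis `1, x, y, z`. Hence
`M ↦ a₀(0) + a₁(0) x + a₂(0) y + a₃(0) z` is a `k`-algebra homomorphism on the order. It is onto
because its image contains the generators `x, y, z` (`KK.subalgebra_eq_top`). Its kernel is
`t·𝒪` because `1, x, y, z` are linearly independent modulo `(x, y, z)²`
(`KK.coeffs_eq_zero`). -/

open Polynomial in
/-- The order `𝒪 ⊆ Mat₂(k[t])`: matrices of the form `[[a₀, t·a₃], [t·a₁, t·a₂ + a₀]]`. -/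
def wahlOrderSet (k : Type*) [Field k] : Set (Matrix (Fin 2) (Fin 2) (Polynomial k)) :=
  {M | ∃ a₀ a₁ a₂ a₃ : Polynomial k,
    M = !![a₀, X * a₃; X * a₁, X * a₂ + a₀]}

open Polynomial in
/-- The set `t·𝒪 ⊆ Mat₂(k[t])`. -/
def wahlOrderSetT (k : Type*) [Field k] : Set (Matrix (Fin 2) (Fin 2) (Polynomial k)) :=
  {M | ∃ N ∈ wahlOrderSet k, M = (X : Polynomial k) • N}

open Polynomial in
theorem mem_wahlOrderSet_iff {k : Type*} [Field k] (M : Matrix (Fin 2) (Fin 2) (Polynomial k)) :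
    M ∈ wahlOrderSet k ↔
      (M 0 1).coeff 0 = 0 ∧ (M 1 0).coeff 0 = 0 ∧ (M 1 1).coeff 0 = (M 0 0).coeff 0 := by
  constructor
  · rintro ⟨a₀, a₁, a₂, a₃, rfl⟩
    simp
  · rintro ⟨h1, h2, h3⟩
    have h3' : (M 1 1 - M 0 0).coeff 0 = 0 := by simp [h3]
    rw [← X_dvd_iff] at h1 h2 h3'
    obtain ⟨a₃, e3⟩ := h1
    obtain ⟨a₁, e1⟩ := h2
    obtain ⟨a₂, e2⟩ := h3'
    refine ⟨M 0 0, a₁, a₂, a₃, ?_⟩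
    ext1 i j
    fin_cases i <;> fin_cases j <;> simp [e3, e1, ← e2]

/-- The matrix with parameters `aᵢ` lies in `t·𝒪` exactly when all four `aᵢ` vanish at `0`. -/
theorem mem_wahlOrderSetT_iff {k : Type*} [Field k] (M : Matrix (Fin 2) (Fin 2) (Polynomial k))
    (hM : M ∈ wahlOrderSet k) :
    M ∈ wahlOrderSetT k ↔ (M 0 0).coeff 0 = 0 ∧ (M 1 0).coeff 1 = 0 ∧
      (M 1 1 - M 0 0).coeff 1 = 0 ∧ (M 0 1).coeff 1 = 0 := by
  constructor
  · rintro ⟨_, ⟨a₀, a₁, a₂, a₃, rfl⟩, rfl⟩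
    simp [Polynomial.coeff_X_mul]
  · obtain ⟨a₀, a₁, a₂, a₃, rfl⟩ := hM
    intro h
    have h' : a₀.coeff 0 = 0 ∧ a₁.coeff 0 = 0 ∧ a₂.coeff 0 = 0 ∧ a₃.coeff 0 = 0 := by
      simpa [Polynomial.coeff_X_mul] using h
    simp only [← Polynomial.X_dvd_iff] at h'
    obtain ⟨⟨b₀, rfl⟩, ⟨b₁, rfl⟩, ⟨b₂, rfl⟩, ⟨b₃, rfl⟩⟩ := h'
    refine ⟨_, ⟨b₀, b₁, b₂, b₃, rfl⟩, ?_⟩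
    ext1 i j
    fin_cases i <;> fin_cases j <;> simp [mul_add]

/-- `k[x, y, z]/(x, y, z)²`. -/
abbrev KK (k : Type*) [Field k] : Type _ :=
  MvPolynomial (Fin 3) k ⧸ (Ideal.span (Set.range (MvPolynomial.X (R := k) (σ := Fin 3))))^2

/-- The class of the `i`-th variable in `k[x, y, z]/(x, y, z)²`. -/
noncomputable def KK.x (k : Type*) [Field k] (i : Fin 3) : KK k :=
  Ideal.Quotient.mk _ (MvPolynomial.X i)

theorem KK.x_mul_x (k : Type*) [Field k] (i j : Fin 3) : KK.x k i * KK.x k j = 0 := by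
  rw [KK.x, KK.x, ← map_mul, Ideal.Quotient.eq_zero_iff_mem, pow_two]
  exact Ideal.mul_mem_mul (Ideal.subset_span ⟨i, rfl⟩) (Ideal.subset_span ⟨j, rfl⟩)

/-- The classes of `x, y, z` generate the algebra, stated for a subalgebra containing them. -/
theorem KK.subalgebra_eq_top {k : Type*} [Field k] (S : Subalgebra k (KK k))
    (hS : ∀ i, KK.x k i ∈ S) : S = ⊤ := by
  rw [eq_top_iff]
  intro q _
  obtain ⟨p, rfl⟩ := Ideal.Quotient.mk_surjective q
  induction p using MvPolynomial.induction_on with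
  | C a => exact S.algebraMap_mem a
  | add p q hp hq =>
    rw [map_add]
    exact S.add_mem (hp trivial) (hq trivial)
  | mul_X p i hp =>
    rw [map_mul]
    exact S.mul_mem (hp trivial) (hS i)

/-- Linear independence of `1, x, y, z`, detected by the map to the square-zero extension
`k ⊕ k³` that sends the variables to the standard basis of `k³`. -/
theorem KK.coeffs_eq_zero {k : Type*} [Field k] (c : k) (v : Fin 3 → k)
    (h : algebraMap k (KK k) c + ∑ i, v i • KK.x k i = 0) : c = 0 ∧ v = 0 := by
  let φ : MvPolynomial (Fin 3) k →ₐ[k] TrivSqZeroExt k (Fin 3 → k) :=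
    MvPolynomial.aeval fun i => TrivSqZeroExt.inr (Pi.single i 1)
  have hφ : ∀ p ∈ (Ideal.span (Set.range (MvPolynomial.X (R := k) (σ := Fin 3))))^2,
      φ p = 0 := by
    intro p hp
    have hle : (Ideal.span (Set.range (MvPolynomial.X (R := k) (σ := Fin 3))))^2 ≤
        RingHom.ker φ := by
      rw [pow_two, Ideal.span_mul_span', Ideal.span_le]
      rintro _ ⟨_, ⟨i, rfl⟩, _, ⟨j, rfl⟩, rfl⟩
      simp [φ, RingHom.mem_ker]
    exact hle hp
  have h2 : φ (MvPolynomial.C c + ∑ i, v i • MvPolynomial.X i) = 0 := by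
    apply hφ
    rw [← Ideal.Quotient.eq_zero_iff_mem, ← h, map_add, map_sum]
    rfl
  have h3 : φ (MvPolynomial.C c + ∑ i, v i • MvPolynomial.X i) =
      TrivSqZeroExt.inl c + TrivSqZeroExt.inr v := by
    rw [map_add, map_sum]
    congr 1
    · simp [φ, TrivSqZeroExt.algebraMap_eq_inl]
    · simp only [map_smul, φ, MvPolynomial.aeval_X, ← TrivSqZeroExt.inr_smul,
        ← TrivSqZeroExt.inr_sum]
      congr 1
      ext j
      simp [Finset.sum_apply, Pi.single_apply]
  rw [h3] at h2
  exact ⟨by simpa using congrArg TrivSqZeroExt.fst h2,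
    by simpa using congrArg TrivSqZeroExt.snd h2⟩

theorem KK.mul_formula {k : Type*} [Field k] (c d : k) (v w : Fin 3 → k) :
    (algebraMap k (KK k) c + ∑ i, v i • KK.x k i) * (algebraMap k (KK k) d + ∑ i, w i • KK.x k i) =
      algebraMap k (KK k) (c * d) + ∑ i, (c • w + d • v) i • KK.x k i := by
  have hx : (∑ i, v i • KK.x k i) * (∑ i, w i • KK.x k i) = 0 := by
    simp [Finset.sum_mul_sum, KK.x_mul_x]
  simp only [Pi.add_apply, Pi.smul_apply, add_smul, Finset.sum_add_distrib, smul_assoc,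
    ← Finset.smul_sum, map_mul]
  rw [Algebra.smul_def, Algebra.smul_def]
  linear_combination hx

/-- The vector `(a₁(0), a₂(0), a₃(0))` attached to the matrix with parameters `aᵢ`, read off from
the coefficients of `t` in its entries. -/
noncomputable def wahlVec {k : Type*} [Field k] (M : Matrix (Fin 2) (Fin 2) (Polynomial k)) :
    Fin 3 → k :=
  ![(M 1 0).coeff 1, (M 1 1 - M 0 0).coeff 1, (M 0 1).coeff 1]

theorem wahlVec_mul {k : Type*} [Field k] (M N : Matrix (Fin 2) (Fin 2) (Polynomial k))
    (hM : M ∈ wahlOrderSet k) (hN : N ∈ wahlOrderSet k) :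
    ((M * N) 0 0).coeff 0 = (M 0 0).coeff 0 * (N 0 0).coeff 0 ∧
      wahlVec (M * N) = (M 0 0).coeff 0 • wahlVec N + (N 0 0).coeff 0 • wahlVec M := by
  rw [mem_wahlOrderSet_iff] at hM hN
  obtain ⟨h1, h2, h3⟩ := hM
  obtain ⟨g1, g2, g3⟩ := hN
  constructor
  · simp [Matrix.mul_apply, Polynomial.mul_coeff_zero, h1]
  · ext i
    fin_cases i <;>
      simp [wahlVec, Matrix.mul_apply, Polynomial.mul_coeff_one, h1, h2, h3, g1, g2, g3] <;> ring

/-- The reduction `M ↦ a₀(0) + a₁(0) x + a₂(0) y + a₃(0) z` on the order. -/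
noncomputable def wahlHom {k : Type*} [Field k]
    (A : Subalgebra (Polynomial k) (Matrix (Fin 2) (Fin 2) (Polynomial k)))
    (hA : (A : Set (Matrix (Fin 2) (Fin 2) (Polynomial k))) = wahlOrderSet k) : A →ₐ[k] KK k :=
  AlgHom.ofLinearMap
    { toFun := fun M => algebraMap k (KK k) ((M.1 0 0).coeff 0) +
        ∑ i, wahlVec M.1 i • KK.x k i
      map_add' := fun M N => by
        simp [wahlVec, Fin.sum_univ_three, add_smul, sub_smul]
        abel
      map_smul' := fun c M => by
        have e : (c • M).1 = c • M.1 := rfl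
        have hv : wahlVec (c • M.1) = c • wahlVec M.1 := by
          ext i
          fin_cases i <;> simp [wahlVec, mul_sub]
        simp only [e, hv, Matrix.smul_apply, Polynomial.coeff_smul, Pi.smul_apply,
          Finset.smul_sum, RingHom.id_apply, smul_add, smul_eq_mul, mul_smul, map_mul,
          ← Algebra.smul_def] }
    (by simp [wahlVec, Fin.sum_univ_three])
    (fun M N => by
      have hM : M.1 ∈ wahlOrderSet k := hA.le M.2
      have hN : N.1 ∈ wahlOrderSet k := hA.le N.2
      obtain ⟨e, f⟩ := wahlVec_mul M.1 N.1 hM hN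
      change algebraMap k (KK k) (((M.1 * N.1) 0 0).coeff 0) +
        ∑ i, wahlVec (M.1 * N.1) i • KK.x k i = _
      rw [e, f]
      exact (KK.mul_formula _ _ _ _).symm)

theorem wahlHom_apply {k : Type*} [Field k]
    (A : Subalgebra (Polynomial k) (Matrix (Fin 2) (Fin 2) (Polynomial k)))
    (hA : (A : Set (Matrix (Fin 2) (Fin 2) (Polynomial k))) = wahlOrderSet k) (M : A) :
    wahlHom A hA M = algebraMap k (KK k) ((M.1 0 0).coeff 0) + ∑ i, wahlVec M.1 i • KK.x k i :=
  rfl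

/-- `t·𝒪` is a two-sided ideal of `𝒪`, and the quotient `𝒪/t𝒪` is isomorphic,
as a `k`-algebra, to `k[x,y,z]/(x,y,z)²` (i.e. the special fiber at `t = 0` of the order `𝒪`
is the four-dimensional Kalck–Karmazyn algebra `R_{4,1}`).  Here `𝒪` is realized as a
`k[t]`-subalgebra `A` of `Mat₂(k[t])` with underlying set `wahlOrderSet k`, and the quotient
is expressed via a surjective `k`-algebra homomorphism with kernel `t·𝒪`. -/
theorem wahlOrderSet_special_fiber (k : Type*) [Field k]
    (A : Subalgebra (Polynomial k) (Matrix (Fin 2) (Fin 2) (Polynomial k)))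
    (hA : (A : Set (Matrix (Fin 2) (Fin 2) (Polynomial k))) = wahlOrderSet k) :
    (wahlOrderSetT k ⊆ wahlOrderSet k) ∧
    (∀ M N, M ∈ wahlOrderSetT k → N ∈ wahlOrderSetT k → M + N ∈ wahlOrderSetT k) ∧
    (∀ M N, M ∈ wahlOrderSet k → N ∈ wahlOrderSetT k →
      M * N ∈ wahlOrderSetT k ∧ N * M ∈ wahlOrderSetT k) ∧
    ∃ ψ : A →ₐ[k]
        (MvPolynomial (Fin 3) k ⧸
          (Ideal.span (Set.range (MvPolynomial.X (R := k) (σ := Fin 3))))^2),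
      Function.Surjective ψ ∧
      ∀ x : A, ψ x = 0 ↔ (x : Matrix (Fin 2) (Fin 2) (Polynomial k)) ∈ wahlOrderSetT k := by
  have mulm : ∀ M N, M ∈ wahlOrderSet k → N ∈ wahlOrderSet k → M * N ∈ wahlOrderSet k := by
    rw [← hA]
    exact fun M N hM hN => A.mul_mem hM hN
  refine ⟨?_, ?_, ?_, wahlHom A hA, ?_, ?_⟩
  · rintro _ ⟨N, hN, rfl⟩
    rw [← hA] at hN ⊢
    exact A.smul_mem hN _
  · rintro _ _ ⟨M, hM, rfl⟩ ⟨N, hN, rfl⟩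
    refine ⟨M + N, ?_, (smul_add _ _ _).symm⟩
    rw [← hA] at hM hN ⊢
    exact A.add_mem hM hN
  · rintro M _ hM ⟨N, hN, rfl⟩
    exact ⟨⟨M * N, mulm _ _ hM hN, Matrix.mul_smul _ _ _⟩,
      ⟨N * M, mulm _ _ hN hM, Matrix.smul_mul _ _ _⟩⟩
  · rw [← AlgHom.range_eq_top]
    apply KK.subalgebra_eq_top
    intro i
    -- A preimage of the `i`-th variable: the parameter `aᵢ₊₁` is `1` and the others are `0`.
    have hmem : (!![0, Polynomial.X * Polynomial.C ((Pi.single i 1 : Fin 3 → k) 2);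
        Polynomial.X * Polynomial.C ((Pi.single i 1 : Fin 3 → k) 0),
        Polynomial.X * Polynomial.C ((Pi.single i 1 : Fin 3 → k) 1) + 0] :
        Matrix (Fin 2) (Fin 2) (Polynomial k)) ∈ A := by
      rw [← SetLike.mem_coe, hA]
      exact ⟨_, _, _, _, rfl⟩
    refine ⟨⟨_, hmem⟩, ?_⟩
    change wahlHom A hA ⟨_, hmem⟩ = _
    rw [wahlHom_apply]
    fin_cases i <;> simp [wahlVec, Fin.sum_univ_three]
  · intro M
    have hM : M.1 ∈ wahlOrderSet k := hA.le M.2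
    rw [mem_wahlOrderSetT_iff _ hM, wahlHom_apply]
    constructor
    · intro h
      obtain ⟨h0, hv⟩ := KK.coeffs_eq_zero _ _ h
      exact ⟨h0, congrFun hv 0, congrFun hv 1, congrFun hv 2⟩
    · rintro ⟨h0, h1, h2, h3⟩
      simp only [wahlVec, Fin.sum_univ_three, h0, h1, h2, h3]
      simp
end

section
/- The matrices M₀, M₁, …, M_{n²−1} are linearly independent over F[t]; consequently 𝒪 is a free F[t]-module of rank n². -/
/-! Write `r k = k q mod n`, so that `[k n q] = n (r k)`; since `q` is prime to `n`, the residues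
`r 1, …, r n` are `0, …, n - 1` in some order. The coefficient `a_ℓ` occurs only in the entries
`(i, j)` with `j - i ≡ ℓ` modulo `n`, so the matrices split into `n` blocks, one for each residue
`d`, and the block of `d` is an `n × n` system in the unknowns `w σ = t^σ a_{d + σ n}`.

For `d = 0` the system is triangular (`eq_zero_of_tail_sums`).

For `d > 0` the equation of the row with `r i = v` says, up to the unit or nonzero factor `1` or
`-t`, that the sum of `w` over an interval `[L, U]` around `v` vanishes (`kawEntry_upper`,
`kawEntry_lower`). Here `L` is the largest element `≤ v` of `E = {-k q mod n : 0 ≤ k ≤ d}`, and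
`U + 1` is the smallest element `> v` of `E' = {-k q mod n : d ≤ k ≤ n}`, with `0` counted as `n`
in the latter. As `E ∪ E'` is everything, the graph on `{0, …, n}` with edges `{L, U + 1}` is
connected, so the partial sums of `w`, which agree at the two ends of each edge, are constant,
and hence `w = 0` (`eq_zero_of_interval_sums`).
-/

open Polynomial in
/-- The `(i,j)` entry (with `i, j : Fin n` representing the 1-based indices `i+1, j+1`) of the
matrix `A ∈ Mat_n(F[t])` of Theorem 1.8 (Kawamata's order), for formal coefficients
`a : ZMod (n²) → F[t]`.  Here `[x]` is the representative of `x` modulo `n²` in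
`{0,…,n²-1}`, and the conditions `< min` / `> max` over ranges of `k` are expressed as
universally quantified inequalities (vacuously true over empty ranges, which accounts for the
clause "either i = 1 or ..."). -/
noncomputable def kawEntry (F : Type*) [Field F] (n q : ℕ)
    (a : ZMod (n ^ 2) → Polynomial F) (i j : Fin n) : Polynomial F :=
  -- 1-based row and column indices
  let I : ℕ := (i : ℕ) + 1
  let J : ℕ := (j : ℕ) + 1
  -- `[k·n·q] + k` as an integer
  let g : ℕ → ℤ := fun k => ((k * n * q) % n ^ 2 : ℕ) + (k : ℤ)
  -- `[i·n·q] + i` as an integer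
  let e : ℤ := ((I * n * q) % n ^ 2 : ℕ) + (I : ℤ)
  -- `[i·n·q]` as an integer
  let c : ℤ := ((I * n * q) % n ^ 2 : ℕ)
  if I < J then
    (∑ ρ ∈ Finset.range n,
      if ((ρ * n : ℕ) : ℤ) < c ∧
          (∀ k ∈ Finset.Icc (I + 1) J, e < ((ρ * n : ℕ) : ℤ) + g k) then
        X ^ ρ * a (((J : ℤ) - (I : ℤ) + (ρ * n : ℕ) : ℤ) : ZMod (n ^ 2))
      else 0)
    +
    (∑ ρ ∈ Finset.Icc 1 n,
      if c < ((ρ * n : ℕ) : ℤ) ∧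
          (∀ k ∈ Finset.Icc 1 (I - 1), ((ρ * n : ℕ) : ℤ) - (n ^ 2 : ℕ) + g k < e) ∧
          (∀ k ∈ Finset.Icc J n, ((ρ : ℤ) - 1) * n - (n ^ 2 : ℕ) + g k < e) then
        X ^ (ρ - 1) * a (((J : ℤ) - (I : ℤ) + (ρ * n : ℕ) - (n : ℕ) : ℤ) : ZMod (n ^ 2))
      else 0)
  else if J < I then
    -(∑ ρ ∈ Finset.Icc 1 n,
      if c < ((ρ * n : ℕ) : ℤ) ∧
          (∀ k ∈ Finset.Icc J (I - 1), ((ρ * n : ℕ) : ℤ) - (n ^ 2 : ℕ) + g k < e) then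
        X ^ ρ * a (((J : ℤ) - (I : ℤ) + (ρ * n : ℕ) : ℤ) : ZMod (n ^ 2))
      else 0)
  else
    a 0 - ∑ ρ ∈ Finset.Icc 1 (n - 1),
      if c < ((ρ * n : ℕ) : ℤ) then X ^ ρ * a ((ρ * n : ℕ) : ZMod (n ^ 2)) else 0

/-- The matrix `M_ℓ ∈ Mat_n(F[t])`: the coefficient of `a_ℓ` in the matrix `A`. -/
noncomputable def kawM (F : Type*) [Field F] (n q : ℕ) (ℓ : ZMod (n ^ 2)) :
    Matrix (Fin n) (Fin n) (Polynomial F) :=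
  Matrix.of fun i j => kawEntry F n q (fun ℓ' => if ℓ' = ℓ then 1 else 0) i j

/-- Kawamata's order `𝒪 ⊆ Mat_n(F[t])`: the `F[t]`-submodule spanned by the `M_ℓ`. -/
noncomputable def kawOrder (F : Type*) [Field F] (n q : ℕ) :
    Submodule (Polynomial F) (Matrix (Fin n) (Fin n) (Polynomial F)) :=
  Submodule.span (Polynomial F) (Set.range (kawM F n q))

/-! ### Linear algebra of interval systems -/

/-- Suppose `E ∪ E'` contains `{1, …, n-1}`, and for every `v < n` the sum of `w` over the interval
from the largest element of `E ∪ {0}` that is `≤ v` up to just below the smallest element of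
`E' ∪ {n}` that is `> v` vanishes.  Then `w = 0`.  With `P` the partial sums of `w`, the
hypothesis says that `P` agrees at the two ends of each interval; the common value `f v` does not
depend on `v`, because passing from `v` to `v + 1` either keeps an end fixed or makes `v + 1` the
right end of one interval and the left end of the next. -/
theorem eq_zero_of_interval_sums {R : Type*} [CommRing R] (n : ℕ) (E E' : ℕ → Prop)
    (hE : ∀ x, 0 < x → x < n → E x ∨ E' x) (w : ℕ → R)
    (h : ∀ v < n, (open Classical in ∑ σ ∈ Finset.range n,
      if (∀ ε, σ < ε → ε ≤ v → ¬ E ε) ∧ (∀ ε, v < ε → ε ≤ σ → ¬ E' ε) then w σ else 0) = 0) :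
    ∀ σ < n, w σ = 0 := by
  classical
  set A : ℕ → R := fun v => ∑ σ ∈ Finset.range v,
    if (∀ ε, σ < ε → ε ≤ v → ¬ E ε) then w σ else 0 with hA
  set B : ℕ → R := fun v => ∑ σ ∈ Finset.Ico v n,
    if (∀ ε, v < ε → ε ≤ σ → ¬ E' ε) then w σ else 0 with hB
  set P : ℕ → R := fun v => ∑ σ ∈ Finset.range v, w σ with hP
  have hAB : ∀ v < n, A v + B v = 0 := by
    intro v hv
    rw [← h v hv, ← Finset.sum_range_add_sum_Ico _ hv.le]
    congr 1
    · refine Finset.sum_congr rfl fun σ hσ => ?_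
      have := Finset.mem_range.1 hσ
      refine if_congr ⟨fun h1 => ⟨h1, fun ε _ _ => by omega⟩, fun h1 => h1.1⟩ rfl rfl
    · refine Finset.sum_congr rfl fun σ hσ => ?_
      have := Finset.mem_Ico.1 hσ
      refine if_congr ⟨fun h1 => ⟨fun ε _ _ => by omega, h1⟩, fun h1 => h1.2⟩ rfl rfl
  have hA1 : ∀ v, E (v + 1) → A (v + 1) = 0 := by
    intro v hv
    refine Finset.sum_eq_zero fun σ hσ => if_neg fun h1 => ?_
    exact h1 (v + 1) (by have := Finset.mem_range.1 hσ; omega) le_rfl hv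
  have hA2 : ∀ v, ¬ E (v + 1) → A (v + 1) = A v + w v := by
    intro v hv
    simp only [hA]
    rw [Finset.sum_range_succ]
    congr 1
    · refine Finset.sum_congr rfl fun σ hσ => if_congr ⟨fun h1 ε h2 h3 => h1 ε h2 (by omega),
        fun h1 ε h2 h3 => ?_⟩ rfl rfl
      rcases Nat.lt_or_ge v ε with h4 | h4
      · rwa [show ε = v + 1 by omega]
      · exact h1 ε h2 h4
    · refine if_pos fun ε h2 h3 => ?_
      rwa [show ε = v + 1 by omega]
  have hB0 : ∀ v < n, B v = w v + ∑ σ ∈ Finset.Ico (v + 1) n,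
      if (∀ ε, v < ε → ε ≤ σ → ¬ E' ε) then w σ else 0 := by
    intro v hv
    simp only [hB]
    rw [Finset.sum_eq_sum_Ico_succ_bot hv]
    congr 1
    exact if_pos fun ε h2 h3 => by omega
  have hB1 : ∀ v < n, E' (v + 1) → B v = w v := by
    intro v hv hv'
    rw [hB0 v hv, Finset.sum_eq_zero, add_zero]
    refine fun σ hσ => if_neg fun h1 => ?_
    exact h1 (v + 1) (by omega) (Finset.mem_Ico.1 hσ).1 hv'
  have hB2 : ∀ v < n, ¬ E' (v + 1) → B v = w v + B (v + 1) := by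
    intro v hv hv'
    rw [hB0 v hv]
    congr 1
    refine Finset.sum_congr rfl fun σ hσ => if_congr ⟨fun h1 ε h2 h3 => h1 ε (by omega) h3,
        fun h1 ε h2 h3 => ?_⟩ rfl rfl
    rcases Nat.lt_or_ge (v + 1) ε with h4 | h4
    · exact h1 ε h4 h3
    · rwa [show ε = v + 1 by omega]
  have hPs : ∀ v, P (v + 1) = P v + w v := fun v => Finset.sum_range_succ _ _
  have hf : ∀ v < n, P v = A v := by
    intro v
    induction v with
    | zero => intro _; simp [hP, hA]
    | succ v ih =>
      intro hv
      have h1 := ih (by omega)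
      have h2 := hAB v (by omega)
      have h3 := hAB (v + 1) hv
      have h4 := hPs v
      by_cases e : E (v + 1)
      · by_cases e' : E' (v + 1)
        · have h5 := hA1 v e
          have h6 := hB1 v (by omega) e'
          linear_combination h4 + h1 - h5 + h2 - h6
        · have h6 := hB2 v (by omega) e'
          linear_combination h4 + h1 + h2 - h3 - h6
      · have h5 := hA2 v e
        linear_combination h4 + h1 - h5
  have hP0 : ∀ v ≤ n, P v = 0 := by
    intro v hv
    rcases v with _ | v
    · simp [hP]
    have h1 := hf v (by omega)
    have h2 := hAB v (by omega)
    have h4 := hPs v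
    rcases Nat.lt_or_ge (v + 1) n with hlt | hge
    · rcases hE (v + 1) (by omega) hlt with e | e
      · rw [hf _ hlt, hA1 v e]
      · have h6 := hB1 v (by omega) e
        linear_combination h4 + h1 + h2 - h6
    · have h6 := hB0 v (by omega)
      rw [Finset.Ico_eq_empty (by omega), Finset.sum_empty] at h6
      linear_combination h4 + h1 + h2 - h6
  intro σ hσ
  have h1 := hPs σ
  rw [hP0 _ hσ, hP0 _ hσ.le] at h1
  linear_combination -h1

/-- The triangular system coming from the diagonal entries. -/
theorem eq_zero_of_tail_sums {R : Type*} [CommRing R] (n : ℕ) (w : ℕ → R)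
    (h : ∀ v < n, w 0 - ∑ ρ ∈ Finset.Icc 1 (n - 1), (if v < ρ then w ρ else 0) = 0) :
    ∀ σ < n, w σ = 0 := by
  intro σ hσ
  rcases σ with _ | σ
  · have h1 := h (n - 1) (by omega)
    rw [Finset.sum_eq_zero] at h1
    · simpa using h1
    · intro ρ hρ
      have := Finset.mem_Icc.1 hρ
      exact if_neg (by omega)
  · have h1 := h σ (by omega)
    have h2 := h (σ + 1) hσ
    have h3 : ∑ ρ ∈ Finset.Icc 1 (n - 1), (if σ < ρ then w ρ else 0) =
        ∑ ρ ∈ Finset.Icc 1 (n - 1), (if σ + 1 < ρ then w ρ else 0) + w (σ + 1) := by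
      have h4 : w (σ + 1) =
          ∑ ρ ∈ Finset.Icc 1 (n - 1), (if ρ = σ + 1 then w ρ else 0) := by
        rw [Finset.sum_ite_eq' (Finset.Icc 1 (n - 1)) (σ + 1) w,
          if_pos (Finset.mem_Icc.2 ⟨by omega, by omega⟩)]
      rw [h4, ← Finset.sum_add_distrib]
      refine Finset.sum_congr rfl fun ρ _ => ?_
      rcases lt_trichotomy ρ (σ + 1) with h5 | h5 | h5
      · simp [show ¬ σ < ρ by omega, show ¬ σ + 1 < ρ by omega, show ρ ≠ σ + 1 by omega]
      · simp [h5]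
      · simp [show σ < ρ by omega, h5, show ρ ≠ σ + 1 by omega]
    linear_combination h2 - h1 - h3

/-! ### Arithmetic of the residues `k q mod n` -/

theorem mod_sq_eq (n q k : ℕ) : (k * n * q) % n ^ 2 = n * ((k * q) % n) := by
  rw [show k * n * q = n * (k * q) by ring, sq, Nat.mul_mod_mul_left]

/-- Comparison of two numbers written in base `n`, the lower digit being larger on the right. -/
theorem mul_add_lt_iff {n A B x y : ℤ} (h1 : x < y) (h2 : y < x + n) :
    n * A + x < n * B + y ↔ A ≤ B := by
  constructor
  · intro h
    by_contra! h'
    nlinarith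
  · intro h
    nlinarith

/-- Comparison of two numbers written in base `n`, the lower digit being smaller on the right. -/
theorem mul_add_lt_iff' {n A B x y : ℤ} (h1 : y < x) (h2 : x < y + n) :
    n * A + x < n * B + y ↔ A < B := by
  constructor
  · intro h
    by_contra! h'
    nlinarith
  · intro h
    have : A + 1 ≤ B := h
    nlinarith

/-- The left ends of the intervals: the residues of `-k q` with `0 ≤ k ≤ d`. -/
def LeftEnd (n q d ε : ℕ) : Prop := ∃ k ≤ d, n ∣ ε + k * q

/-- The right ends of the intervals: the residues of `-k q` with `d ≤ k ≤ n`. -/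
def RightEnd (n q d ε : ℕ) : Prop := ∃ k, d ≤ k ∧ k ≤ n ∧ n ∣ ε + k * q

theorem exists_mul_mod {n q : ℕ} (hn : 0 < n) (hcop : Nat.Coprime q n) {v : ℕ} (hv : v < n) :
    ∃ i < n, ((i + 1) * q) % n = v := by
  have : NeZero n := ⟨hn.ne'⟩
  set u : ZMod n := (v : ZMod n) * (q : ZMod n)⁻¹ - 1 with hu
  refine ⟨u.val, ZMod.val_lt u, ?_⟩
  have h1 : (((u.val + 1) * q : ℕ) : ZMod n) = (v : ℕ) := by
    push_cast
    rw [ZMod.natCast_zmod_val, hu, sub_add_cancel, mul_assoc, mul_comm (_ : ZMod n)⁻¹,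
      ZMod.coe_mul_inv_eq_one q hcop, mul_one]
  have h2 := (ZMod.natCast_eq_natCast_iff' _ _ _).1 h1
  rwa [Nat.mod_eq_of_lt hv] at h2

theorem leftEnd_or_rightEnd {n q : ℕ} (hn : 0 < n) (hcop : Nat.Coprime q n) (d x : ℕ) :
    LeftEnd n q d x ∨ RightEnd n q d x := by
  obtain ⟨i, hi, h⟩ := exists_mul_mod hn hcop (v := (n - x % n) % n) (Nat.mod_lt _ hn)
  have h1 : n ∣ x + (i + 1) * q := by
    rw [Nat.dvd_iff_mod_eq_zero, Nat.add_mod, h, Nat.add_mod_mod]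
    rw [show x % n + (n - x % n) = n from by have := Nat.mod_lt x hn; omega, Nat.mod_self]
  rcases le_total (i + 1) d with h2 | h2
  · exact Or.inl ⟨i + 1, h2, h1⟩
  · exact Or.inr ⟨i + 1, h2, hi, h1⟩

/-- If `k ≡ i + k'` modulo `n`, then `ε` is the residue of `-k' q` exactly when it is the difference
between the residues of `i q` and `k q`, modulo `n`. -/
theorem dvd_add_iff {n q i k k' ε : ℕ} (hk : k = i + k' ∨ k + n = i + k') :
    n ∣ ε + k' * q ↔ (n : ℤ) ∣ (ε : ℤ) + ((k * q % n : ℕ) : ℤ) - ((i * q % n : ℕ) : ℤ) := by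
  have e1 : (n : ℤ) ∣ ((k * q : ℕ) : ℤ) - ((k * q % n : ℕ) : ℤ) := by
    push_cast; exact Int.dvd_self_sub_emod
  have e2 : (n : ℤ) ∣ ((i * q : ℕ) : ℤ) - ((i * q % n : ℕ) : ℤ) := by
    push_cast; exact Int.dvd_self_sub_emod
  obtain ⟨x, hx⟩ := e1
  obtain ⟨y, hy⟩ := e2
  rw [← Int.natCast_dvd_natCast]
  obtain ⟨z, hz⟩ : ∃ z : ℤ, (k' : ℤ) = k - i + n * z := by
    rcases hk with h | h
    · exact ⟨0, by rw [h]; push_cast; ring⟩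
    · exact ⟨1, by have : (k : ℤ) + n = i + k' := by exact_mod_cast h
                   linarith⟩
  have key : ((ε + k' * q : ℕ) : ℤ) =
      ((ε : ℤ) + ((k * q % n : ℕ) : ℤ) - ((i * q % n : ℕ) : ℤ)) + n * (x - y + z * q) := by
    push_cast at hx hy ⊢
    rw [hz]
    linear_combination hx - hy
  rw [key]
  exact (Int.dvd_add_left (Dvd.intro _ rfl))

theorem residue_eq {n ε x v : ℕ} (hx : x < n) (hv : v < n) (hε : ε ≤ n) (hε0 : 0 < ε)
    (h : (n : ℤ) ∣ (ε : ℤ) + x - v) : ε + x = v ∨ ε + x = v + n := by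
  obtain ⟨c, hc⟩ := h
  have h1 : -1 < c := by by_contra!; nlinarith
  have h2 : c < 2 := by by_contra!; nlinarith
  interval_cases c
  · left; omega
  · right; omega

/-- The condition on `σ` in the first sum of an entry above the diagonal says that no left end lies
in `(σ, v]`, where `v` is the residue of `I q`. -/
theorem left_iff {n q I d σ : ℕ} (hn : 0 < n) (hσ : σ < I * q % n) :
    (∀ k, I + 1 ≤ k → k ≤ I + d → I * q % n ≤ σ + k * q % n) ↔
      ∀ ε, σ < ε → ε ≤ I * q % n → ¬ LeftEnd n q d ε := by
  have hv := Nat.mod_lt (I * q) hn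
  constructor
  · rintro h ε h1 h2 ⟨k', h3, h4⟩
    rcases Nat.eq_zero_or_pos k' with rfl | h0
    · rw [zero_mul, add_zero] at h4
      have := Nat.le_of_dvd (by omega) h4
      omega
    · have h5 := h (I + k') (by omega) (by omega)
      rw [dvd_add_iff (i := I) (Or.inl rfl)] at h4
      have := residue_eq (Nat.mod_lt _ hn) hv (by omega) (by omega) h4
      have := Nat.mod_lt ((I + k') * q) hn
      omega
  · intro h k h1 h2
    by_contra! h3
    refine h (I * q % n - k * q % n) (by omega) (by omega) ⟨k - I, by omega, ?_⟩
    rw [dvd_add_iff (i := I) (k := k) (by omega)]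
    exact ⟨0, by omega⟩

/-- The condition on `σ` in the remaining sums off the diagonal says that no right end lies in
`(v, σ]`, where `v` is the residue of `I q`. The predicate `S` describes the indices from `I + d` to
`I - 1`, cyclically modulo `n`. -/
theorem right_iff {n q I d σ : ℕ} (S : ℕ → Prop) (hn : 0 < n) (hσ : σ < n)
    (hS1 : ∀ k, S k → ∃ k', d ≤ k' ∧ k' ≤ n ∧ (k = I + k' ∨ k + n = I + k'))
    (hS2 : ∀ k', d ≤ k' → k' < n → ∃ k, S k ∧ (k = I + k' ∨ k + n = I + k')) :
    (∀ k, S k → σ + 1 + k * q % n ≤ n + I * q % n) ↔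
      ∀ ε, I * q % n < ε → ε ≤ σ → ¬ RightEnd n q d ε := by
  have hv := Nat.mod_lt (I * q) hn
  constructor
  · rintro h ε h1 h2 ⟨k', h3, h3', h4⟩
    rcases h3'.eq_or_lt with rfl | h0
    · have h5 : k' ∣ ε := (Nat.dvd_add_left (Dvd.intro _ rfl)).1 h4
      have := Nat.le_of_dvd (by omega) h5
      omega
    · obtain ⟨k, hk, hk'⟩ := hS2 k' h3 h0
      have h5 := h k hk
      rw [dvd_add_iff hk'] at h4
      have := residue_eq (Nat.mod_lt _ hn) hv (by omega) (by omega) h4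
      omega
  · intro h k hk
    by_contra! h3
    obtain ⟨k', h4, h5, h6⟩ := hS1 k hk
    have := Nat.mod_lt (k * q) hn
    refine h (I * q % n + n - k * q % n) (by omega) (by omega) ⟨k', h4, h5, ?_⟩
    rw [dvd_add_iff h6]
    exact ⟨1, by omega⟩

/-! ### The entries of the matrix -/

open Polynomial in
/-- The sum of `t ^ σ * a (d + σ n)` over the interval of those `σ < n` that no left end separates
from `v` below and no right end separates from `v` above. Up to a factor `1` or `-t`, it is the entry
on the cyclic diagonal `j - i ≡ d` in the row whose residue `i q mod n` is `v`. -/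
noncomputable def intervalSum (F : Type*) [Field F] (n q : ℕ) (a : ZMod (n ^ 2) → F[X])
    (d v : ℕ) : F[X] :=
  open Classical in ∑ σ ∈ Finset.range n,
    if (∀ ε, σ < ε → ε ≤ v → ¬ LeftEnd n q d ε) ∧ (∀ ε, v < ε → ε ≤ σ → ¬ RightEnd n q d ε)
    then X ^ σ * a ((d + σ * n : ℕ) : ZMod (n ^ 2)) else 0

theorem sum_Icc_one {M : Type*} [AddCommMonoid M] (n : ℕ) (f : ℕ → M) :
    ∑ ρ ∈ Finset.Icc 1 n, f ρ = ∑ σ ∈ Finset.range n, f (σ + 1) := by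
  rw [Finset.range_eq_Ico, Finset.sum_Ico_add' f 0 n 1]
  rfl

open Polynomial in
theorem kawEntry_upper (F : Type*) [Field F] (n q : ℕ) (a : ZMod (n ^ 2) → F[X]) (i j : Fin n)
    (d : ℕ) (hd : 0 < d) (hij : (j : ℕ) = i + d) :
    kawEntry F n q a i j = intervalSum F n q a d (((i : ℕ) + 1) * q % n) := by
  classical
  have hi := i.2
  have hj := j.2
  have hn : 0 < n := by omega
  unfold kawEntry intervalSum
  simp only [mod_sq_eq, hij]
  rw [if_pos (by omega), sum_Icc_one, ← Finset.sum_add_distrib]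
  refine Finset.sum_congr rfl fun σ hσ => ?_
  rw [Finset.mem_range] at hσ
  set I := (i : ℕ) + 1 with hI
  have hv := Nat.mod_lt (I * q) hn
  have hl := left_iff (q := q) (d := d) (σ := σ) (I := I) hn
  have hr := right_iff (q := q) (d := d) (σ := σ) (I := I)
    (fun k => (1 ≤ k ∧ k ≤ I - 1) ∨ (I + d ≤ k ∧ k ≤ n)) hn hσ (by
      rintro k (hk | hk)
      · exact ⟨k + n - I, by omega⟩
      · exact ⟨k - I, by omega⟩) (by
      intro k' h1 h2
      rcases Nat.lt_or_ge n (I + k') with h3 | h3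
      · exact ⟨I + k' - n, by omega⟩
      · exact ⟨I + k', by omega⟩)
  have c1 : ((σ * n : ℕ) : ℤ) < ((n * (I * q % n) : ℕ) : ℤ) ↔ σ < I * q % n := by
    rw [Nat.cast_lt, mul_comm σ, Nat.mul_lt_mul_left hn]
  have c2 : ((n * (I * q % n) : ℕ) : ℤ) < (((σ + 1) * n : ℕ) : ℤ) ↔ I * q % n ≤ σ := by
    rw [Nat.cast_lt, mul_comm (σ + 1), Nat.mul_lt_mul_left hn, Nat.lt_succ_iff]
  have c3 : (∀ k ∈ Finset.Icc (I + 1) (i + d + 1), ((n * (I * q % n) : ℕ) : ℤ) + (I : ℤ) <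
      ((σ * n : ℕ) : ℤ) + (((n * (k * q % n) : ℕ) : ℤ) + (k : ℤ))) ↔
      ∀ k, I + 1 ≤ k → k ≤ I + d → I * q % n ≤ σ + k * q % n := by
    refine forall_congr' fun k => ?_
    rw [Finset.mem_Icc, and_imp, show i + d + 1 = I + d by omega]
    refine forall_congr' fun h1 => forall_congr' fun h2 => ?_
    have := mul_add_lt_iff (n := n) (A := (I * q % n : ℕ)) (B := ((σ + k * q % n : ℕ) : ℤ))
      (x := I) (y := k) (by omega) (by omega)
    rw [Nat.cast_le] at this
    rw [← this]
    refine iff_of_eq ?_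
    congr 1
    push_cast
    ring
  have c4 : ((∀ k ∈ Finset.Icc 1 (I - 1), (((σ + 1) * n : ℕ) : ℤ) - ((n ^ 2 : ℕ) : ℤ) +
        (((n * (k * q % n) : ℕ) : ℤ) + (k : ℤ)) < ((n * (I * q % n) : ℕ) : ℤ) + (I : ℤ)) ∧
      (∀ k ∈ Finset.Icc (i + d + 1) n, (((σ + 1 : ℕ) : ℤ) - 1) * (n : ℤ) - ((n ^ 2 : ℕ) : ℤ) +
        (((n * (k * q % n) : ℕ) : ℤ) + (k : ℤ)) < ((n * (I * q % n) : ℕ) : ℤ) + (I : ℤ))) ↔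
      ∀ k, (1 ≤ k ∧ k ≤ I - 1) ∨ (I + d ≤ k ∧ k ≤ n) →
        σ + 1 + k * q % n ≤ n + I * q % n := by
    simp only [or_imp, forall_and]
    refine and_congr ?_ ?_
    · refine forall_congr' fun k => ?_
      rw [Finset.mem_Icc]
      refine forall_congr' fun h1 => ?_
      have := mul_add_lt_iff (n := n) (A := ((σ + 1 + k * q % n : ℕ) : ℤ))
        (B := ((n + I * q % n : ℕ) : ℤ)) (x := k) (y := I) (by omega) (by omega)
      rw [Nat.cast_le] at this
      rw [← this, ← sub_pos, ← sub_pos (b := (n : ℤ) * ((σ + 1 + k * q % n : ℕ) : ℤ) + k)]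
      refine iff_of_eq ?_
      congr 1
      push_cast
      ring
    · refine forall_congr' fun k => ?_
      rw [Finset.mem_Icc, show i + d + 1 = I + d by omega]
      refine forall_congr' fun h1 => ?_
      have := mul_add_lt_iff' (n := n) (A := ((σ + k * q % n : ℕ) : ℤ))
        (B := ((n + I * q % n : ℕ) : ℤ)) (x := k) (y := I) (by omega) (by omega)
      rw [Nat.cast_lt] at this
      rw [show σ + 1 + k * q % n ≤ n + I * q % n ↔ σ + k * q % n < n + I * q % n by omega,
        ← this, ← sub_pos, ← sub_pos (b := (n : ℤ) * ((σ + k * q % n : ℕ) : ℤ) + k)]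
      refine iff_of_eq ?_
      congr 1
      push_cast
      ring
  have i1 : ((((i + d + 1 : ℕ) : ℤ) - (I : ℤ) + ((σ * n : ℕ) : ℤ) : ℤ) : ZMod (n ^ 2)) =
      ((d + σ * n : ℕ) : ZMod (n ^ 2)) := by
    rw [show (((i + d + 1 : ℕ) : ℤ) - (I : ℤ) + ((σ * n : ℕ) : ℤ) : ℤ) = ((d + σ * n : ℕ) : ℤ) by
      rw [hI]; push_cast; ring, Int.cast_natCast]
  have i2 : ((((i + d + 1 : ℕ) : ℤ) - (I : ℤ) + (((σ + 1) * n : ℕ) : ℤ) - (n : ℤ) : ℤ) :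
      ZMod (n ^ 2)) = ((d + σ * n : ℕ) : ZMod (n ^ 2)) := by
    rw [show (((i + d + 1 : ℕ) : ℤ) - (I : ℤ) + (((σ + 1) * n : ℕ) : ℤ) - (n : ℤ) : ℤ) =
      ((d + σ * n : ℕ) : ℤ) by rw [hI]; push_cast; ring, Int.cast_natCast]
  rw [i1, i2, show σ + 1 - 1 = σ from rfl]
  simp only [c1, c2, c3, c4]
  rcases Nat.lt_or_ge σ (I * q % n) with h | h
  · rw [if_neg (c := I * q % n ≤ σ ∧ _) (fun h' => by omega), add_zero]
    exact if_congr ⟨fun h' => ⟨(hl h).1 h'.2, fun ε _ _ => by omega⟩,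
      fun h' => ⟨h, (hl h).2 h'.1⟩⟩ rfl rfl
  · rw [if_neg (c := σ < I * q % n ∧ _) (fun h' => by omega), zero_add]
    exact if_congr ⟨fun h' => ⟨fun ε _ _ => by omega, hr.1 h'.2⟩,
      fun h' => ⟨h, hr.2 h'.2⟩⟩ rfl rfl

open Polynomial in
theorem kawEntry_lower (F : Type*) [Field F] (n q : ℕ) (a : ZMod (n ^ 2) → F[X]) (i j : Fin n)
    (d : ℕ) (hd : d < n) (hij : (j : ℕ) + n = i + d) :
    kawEntry F n q a i j = -(X * intervalSum F n q a d (((i : ℕ) + 1) * q % n)) := by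
  classical
  have hi := i.2
  have hj := j.2
  have hn : 0 < n := by omega
  unfold kawEntry intervalSum
  simp only [mod_sq_eq]
  rw [if_neg (by omega), if_pos (by omega), sum_Icc_one, Finset.mul_sum]
  congr 1
  refine Finset.sum_congr rfl fun σ hσ => ?_
  rw [Finset.mem_range] at hσ
  set I := (i : ℕ) + 1 with hI
  have hv := Nat.mod_lt (I * q) hn
  have hr := right_iff (q := q) (d := d) (σ := σ) (I := I)
    (fun k => j + 1 ≤ k ∧ k ≤ I - 1) hn hσ (by
      rintro k hk
      exact ⟨k + n - I, by omega⟩) (by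
      intro k' h1 h2
      exact ⟨I + k' - n, by omega⟩)
  have c2 : ((n * (I * q % n) : ℕ) : ℤ) < (((σ + 1) * n : ℕ) : ℤ) ↔ I * q % n ≤ σ := by
    rw [Nat.cast_lt, mul_comm (σ + 1), Nat.mul_lt_mul_left hn, Nat.lt_succ_iff]
  have c4 : (∀ k ∈ Finset.Icc ((j : ℕ) + 1) (I - 1), (((σ + 1) * n : ℕ) : ℤ) - ((n ^ 2 : ℕ) : ℤ) +
        (((n * (k * q % n) : ℕ) : ℤ) + (k : ℤ)) < ((n * (I * q % n) : ℕ) : ℤ) + (I : ℤ)) ↔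
      ∀ k, (j : ℕ) + 1 ≤ k ∧ k ≤ I - 1 → σ + 1 + k * q % n ≤ n + I * q % n := by
    refine forall_congr' fun k => ?_
    rw [Finset.mem_Icc]
    refine forall_congr' fun h1 => ?_
    have := mul_add_lt_iff (n := n) (A := ((σ + 1 + k * q % n : ℕ) : ℤ))
      (B := ((n + I * q % n : ℕ) : ℤ)) (x := k) (y := I) (by omega) (by omega)
    rw [Nat.cast_le] at this
    rw [← this, ← sub_pos, ← sub_pos (b := (n : ℤ) * ((σ + 1 + k * q % n : ℕ) : ℤ) + k)]
    refine iff_of_eq ?_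
    congr 1
    push_cast
    ring
  have i1 : ((((j + 1 : ℕ) : ℤ) - (I : ℤ) + (((σ + 1) * n : ℕ) : ℤ) : ℤ) :
      ZMod (n ^ 2)) = ((d + σ * n : ℕ) : ZMod (n ^ 2)) := by
    have : (j : ℤ) + n = i + d := by exact_mod_cast hij
    rw [show (((j + 1 : ℕ) : ℤ) - (I : ℤ) + (((σ + 1) * n : ℕ) : ℤ) : ℤ) =
      ((d + σ * n : ℕ) : ℤ) by rw [hI]; push_cast; linarith, Int.cast_natCast]
  rw [i1]
  simp only [c2, c4]
  rw [mul_ite, mul_zero, ← mul_assoc, ← pow_succ']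
  refine if_congr ⟨fun h' => ⟨fun ε _ _ => by omega, hr.1 h'.2⟩, fun h' => ⟨?_, hr.2 h'.2⟩⟩ rfl rfl
  by_contra! h
  -- the index `n ≡ 0` lies in the cyclic interval `[I, I + d]`, so the residue of `I q` is itself
  -- a left end
  refine h'.1 _ h le_rfl ⟨n - I, by omega, ?_⟩
  rw [dvd_add_iff (i := I) (k := n) (by omega)]
  simp

open Polynomial in
theorem kawEntry_diag (F : Type*) [Field F] (n q : ℕ) (a : ZMod (n ^ 2) → F[X]) (i : Fin n) :
    kawEntry F n q a i i = a 0 - ∑ ρ ∈ Finset.Icc 1 (n - 1),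
      if ((i : ℕ) + 1) * q % n < ρ then X ^ ρ * a ((ρ * n : ℕ) : ZMod (n ^ 2)) else 0 := by
  have hn : 0 < n := i.pos
  unfold kawEntry
  simp only [mod_sq_eq]
  rw [if_neg (by omega), if_neg (by omega)]
  congr 1
  refine Finset.sum_congr rfl fun ρ _ => if_congr ?_ rfl rfl
  rw [Nat.cast_lt, mul_comm ρ, Nat.mul_lt_mul_left hn]

open Polynomial in
/-- `kawEntry` is linear in the coefficients, so a linear combination of the `M_ℓ` is the matrix
`A` evaluated at the coefficients of the combination. -/
theorem sum_mul_kawEntry (F : Type*) [Field F] (n q : ℕ) [NeZero (n ^ 2)]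
    (a : ZMod (n ^ 2) → F[X]) (i j : Fin n) :
    ∑ ℓ, a ℓ * kawEntry F n q (fun ℓ' => if ℓ' = ℓ then 1 else 0) i j =
      kawEntry F n q a i j := by
  have key : ∀ (s : Finset ℕ) (p : ℕ → Prop) [DecidablePred p] (e : ℕ → ℕ)
      (x : ℕ → ZMod (n ^ 2)),
      ∑ ℓ, a ℓ * ∑ ρ ∈ s, (if p ρ then (X : F[X]) ^ e ρ * (if x ρ = ℓ then 1 else 0) else 0) =
        ∑ ρ ∈ s, if p ρ then X ^ e ρ * a (x ρ) else 0 := by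
    intro s p _ e x
    simp only [Finset.mul_sum]
    rw [Finset.sum_comm]
    refine Finset.sum_congr rfl fun ρ _ => ?_
    split_ifs
    · simp [mul_comm]
    · simp
  unfold kawEntry
  dsimp only
  split_ifs
  · simp only [mul_add, Finset.sum_add_distrib]
    rw [key, key]
  · simp only [mul_neg, Finset.sum_neg_distrib]
    rw [key]
  · simp only [mul_sub, Finset.sum_sub_distrib]
    rw [key]
    simp

/-- the matrices `M₀, …, M_{n²-1}` are linearly independent over `F[t]`;
consequently `𝒪` is a free `F[t]`-module of rank `n²`. -/
theorem kawM_linearIndependent (F : Type*) [Field F] (n q : ℕ)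
    (hq : 0 < q) (hqn : q < n) (hcop : Nat.Coprime q n) :
    LinearIndependent (Polynomial F) (kawM F n q) ∧
    Module.Free (Polynomial F) (kawOrder F n q) ∧
    Module.finrank (Polynomial F) (kawOrder F n q) = n ^ 2 := by
  classical
  have hn : 0 < n := by omega
  have : NeZero (n ^ 2) := ⟨by positivity⟩
  have hli : LinearIndependent (Polynomial F) (kawM F n q) := by
    rw [Fintype.linearIndependent_iff]
    intro a ha
    have hA : ∀ i j, kawEntry F n q a i j = 0 := by
      intro i j
      rw [← sum_mul_kawEntry]
      simpa [Matrix.sum_apply, kawM] using congrFun (congrFun ha i) j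
    have hw : ∀ d < n, ∀ σ < n,
        (Polynomial.X : Polynomial F) ^ σ * a ((d + σ * n : ℕ) : ZMod (n ^ 2)) = 0 := by
      intro d hd
      rcases Nat.eq_zero_or_pos d with rfl | hd0
      · refine eq_zero_of_tail_sums n _ fun v hv => ?_
        obtain ⟨i, hi, hiv⟩ := exists_mul_mod hn hcop hv
        have h := hA ⟨i, hi⟩ ⟨i, hi⟩
        rw [kawEntry_diag] at h
        simpa [hiv] using h
      · refine eq_zero_of_interval_sums n (LeftEnd n q d) (RightEnd n q d)
          (fun x _ _ => leftEnd_or_rightEnd hn hcop d x) _ fun v hv => ?_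
        change intervalSum F n q a d v = 0
        obtain ⟨i, hi, hiv⟩ := exists_mul_mod hn hcop hv
        rcases Nat.lt_or_ge (i + d) n with h1 | h1
        · have h := hA ⟨i, hi⟩ ⟨i + d, h1⟩
          rw [kawEntry_upper F n q a _ _ d hd0 rfl] at h
          simpa [hiv] using h
        · have h := hA ⟨i, hi⟩ ⟨i + d - n, by omega⟩
          rw [kawEntry_lower F n q a _ _ d hd (by simp only; omega)] at h
          simpa [hiv] using h
    intro ℓ
    have hlt : ℓ.val < n * n := (ZMod.val_lt ℓ).trans_eq (sq n)
    have h := hw (ℓ.val % n) (Nat.mod_lt _ hn) (ℓ.val / n) (Nat.div_lt_of_lt_mul hlt)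
    rw [Nat.mod_add_div', ZMod.natCast_zmod_val] at h
    exact (mul_eq_zero.1 h).resolve_left (pow_ne_zero _ Polynomial.X_ne_zero)
  refine ⟨hli, Module.Free.of_basis (Module.Basis.span hli), ?_⟩
  rw [kawOrder, finrank_span_eq_card hli, ZMod.card]
end

section
/- The equations m_{ij} = 0 hold for all 1 ≤ i < j ≤ r−1 if and only if t₂ = t₃ = … = t_{r−2} = 0 and s = −t₁·t_{r−1}. (This identifies the locus of bounding cochains yielding constant-rank deformations for the cone over the rational normal curve of degree r, r ≥ 5, as a single irreducible component.) -/
/-!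
The three-term relations already suffice for the vanishing: `m_{i,i+1} = t_i t_{i+1}` and
`m_{i,i+2} = t_i t_{i+2} + t_{i+1}²`, so multiplying the second by `t_{i+1}` and using the first
gives `t_{i+1}³ = 0`. Because `r ≥ 5`, the pair `(1, r-1)` is never of the form `(i, i+2)`, so `s`
does not interfere. Once the middle `t_u` vanish, only the term `u = 1` of `m_{1,r-1}` survives
(`sum_corner`), and every other `m_{ij}` vanishes termwise.
-/

/-- When the middle `t_u` vanish, the corner sum reduces to its `u = 1` term. -/
theorem sum_corner {k : Type*} [Field k] {r : ℕ} (hr : 5 ≤ r) {t : ℕ → k}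
    (h : ∀ u : ℕ, 2 ≤ u → u ≤ r - 2 → t u = 0) :
    ∑ u ∈ Finset.Ico 1 (r - 1), t u * t (1 + (r - 1) - u) = t 1 * t (r - 1) := by
  rw [Finset.sum_eq_single_of_mem 1 (Finset.mem_Ico.2 ⟨le_rfl, by omega⟩)]
  · rw [Nat.add_sub_cancel_left]
  · intro u hu hu1
    rw [Finset.mem_Ico] at hu
    rw [h u (by omega) (by omega), zero_mul]


/-- for `r ≥ 5`, the equations `m_{ij} = 0` (for `1 ≤ i < j ≤ r−1`), where
`m_{ij} = Σ_{u=i}^{j-1} t_u·t_{i+j-u}` for `(i,j) ≠ (1, r−1)` and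
`m_{1,r−1} = s + Σ_{u=1}^{r−2} t_u·t_{r−u}`, hold if and only if
`t₂ = … = t_{r−2} = 0` and `s = −t₁·t_{r−1}`. -/
theorem matrixD_vanishing_locus (k : Type*) [Field k] (r : ℕ) (hr : 5 ≤ r)
    (t : ℕ → k) (s : k) :
    (∀ i j : ℕ, 1 ≤ i → i < j → j ≤ r - 1 →
      (if i = 1 ∧ j = r - 1 then s else 0)
        + ∑ u ∈ Finset.Ico i j, t u * t (i + j - u) = 0) ↔
    ((∀ u : ℕ, 2 ≤ u → u ≤ r - 2 → t u = 0) ∧ s = -(t 1 * t (r - 1))) := by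
  constructor
  · intro H
    have h : ∀ u : ℕ, 2 ≤ u → u ≤ r - 2 → t u = 0 := by
      intro u hu hur
      obtain ⟨i, rfl⟩ : ∃ i, u = i + 1 := ⟨u - 1, by omega⟩
      have h1 := H i (i + 1) (by omega) (by omega) (by omega)
      have h2 := H i (i + 2) (by omega) (by omega) (by omega)
      rw [if_neg (by omega), zero_add, Finset.sum_Ico_succ_top le_rfl, Finset.Ico_self,
        Finset.sum_empty, zero_add, show i + (i + 1) - i = i + 1 by omega] at h1
      rw [if_neg (by omega), zero_add, Finset.sum_Ico_succ_top (by omega),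
        Finset.sum_Ico_succ_top le_rfl, Finset.Ico_self,
        Finset.sum_empty, zero_add, show i + (i + 2) - i = i + 2 by omega,
        show i + (i + 2) - (i + 1) = i + 1 by omega] at h2
      have h3 : t (i + 1) ^ 3 = 0 := by
        linear_combination t (i + 1) * h2 - t (i + 2) * h1
      exact pow_eq_zero_iff (by norm_num) |>.1 h3
    refine ⟨h, ?_⟩
    have h1 := H 1 (r - 1) le_rfl (by omega) le_rfl
    rw [if_pos ⟨rfl, rfl⟩, sum_corner hr h] at h1
    exact eq_neg_of_add_eq_zero_left h1
  · rintro ⟨h, rfl⟩ i j hi hij hj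
    by_cases hc : i = 1 ∧ j = r - 1
    · obtain ⟨rfl, rfl⟩ := hc
      rw [if_pos ⟨rfl, rfl⟩, sum_corner hr h, neg_add_cancel]
    · rw [if_neg hc, zero_add]
      refine Finset.sum_eq_zero fun u hu => ?_
      rw [Finset.mem_Ico] at hu
      by_cases hu1 : u = 1
      -- Here `i = 1`, so the second factor is `t j` with `2 ≤ j ≤ r - 2`.
      · rw [h (i + j - u) (by omega) (by omega), mul_zero]
      · rw [h u (by omega) (by omega), zero_mul]
end
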